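/- arXiv:2411.03508 — 6 statements merged into one kernel-verified Lean document; each statement's English description precedes it below -/
import Mathlib

section
/- Assume additionally that one of the following holds: (i) the characteristic of K is a prime p and n is a power of p; or (ii) K has characteristic 0 and d does not divide n − 1. Then the set of K-points (a,c) of the affine curve y^d = f(x) that are torsion points of order exactly n (i.e., n is the least positive integer with m_{(a,c)}^n principal) has cardinality either 0 or d. -/
open Polynomial

/-- The affine coordinate ring `A = K[X,Y]/(Y^d − f(X))` of the curve `y^d = f(x)`,
realized as `AdjoinRoot` of the polynomial `Y^d - f(X)` over `K[X]`. -/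
noncomputable abbrev CurveRing (K : Type*) [Field K] (d : ℕ) (f : K[X]) : Type _ :=
  AdjoinRoot ((X : K[X][X]) ^ d - C f)

/-- The maximal ideal `m_{(a,c)} = (X - a, Y - c)` of the coordinate ring. -/
noncomputable def ptIdeal {K : Type*} [Field K] (d : ℕ) (f : K[X]) (a c : K) :
    Ideal (CurveRing K d f) :=
  Ideal.span {AdjoinRoot.of _ (X - C a), AdjoinRoot.root _ - AdjoinRoot.of _ (C c)}

/-- `P = (a,c)` is a torsion point of order `m` on the Jacobian: `m` is the least
positive integer such that `m_P ^ m` is a principal ideal of `A`. -/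
def IsTorsionOfOrder {K : Type*} [Field K] (d : ℕ) (f : K[X]) (a c : K) (m : ℕ) : Prop :=
  IsLeast {k : ℕ | 0 < k ∧ (ptIdeal d f a c ^ k).IsPrincipal} m

/-!
Suppose `m_P ^ n` is generated by `h`, where `P = (a, c)`, `n = deg f` and `c ≠ 0`. The product of
the ideals of the `d` points over `x = a` is generated by `x - a`, so the norm of `h` is
`(x - a) ^ n` up to a unit, and `h` has a pole of order `n` at infinity. There `x` has a pole of
order `d` and `y` one of order `n`; as `d` and `n` are coprime, `h` is up to a constant `y - v(x)`
with `d * deg v < n`. Taking norms again gives `f = (X - a) ^ n + v ^ d`.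

Such a representation determines `a`. If `n` is invertible in `K` and `d ∤ n - 1`, compare the
coefficients of `X ^ (n - 1)`. If `n` is a power of the characteristic, two representations with
`a ≠ b` give a nonzero constant `w ^ d - v ^ d`, whose factors `w - ζ * v` are then constant; so `v`
is constant and `f` has zero derivative. Hence the points of order `n` share their `x`-coordinate
and, being permuted by `y ↦ ζ * y`, form a single orbit of `d` points.
-/

section Ideal

variable {R : Type*} [CommRing R]

lemma prod_span_pair_le {ι : Type*} (T : Finset ι) (s : R) (t : ι → R) :
    ∏ j ∈ T, Ideal.span {s, t j} ≤ Ideal.span {s, ∏ j ∈ T, t j} := by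
  classical
  induction T using Finset.induction_on with
  | empty => simp [Ideal.span_insert]
  | insert j T hj ih =>
    rw [Finset.prod_insert hj, Finset.prod_insert hj]
    refine (Ideal.mul_mono_right ih).trans ?_
    rw [Ideal.span_pair_mul_span_pair, Ideal.span_le]
    rintro _ (rfl | rfl | rfl | rfl)
    · exact Ideal.mem_span_pair.mpr ⟨s, 0, by ring⟩
    · exact Ideal.mem_span_pair.mpr ⟨∏ i ∈ T, t i, 0, by ring⟩
    · exact Ideal.mem_span_pair.mpr ⟨t j, 0, by ring⟩
    · exact Ideal.mem_span_pair.mpr ⟨0, 1, by ring⟩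

lemma prod_span_pair_eq_span_singleton {ι : Type*} {T : Finset ι} {s : R} {t : ι → R}
    (hcop : (T : Set ι).Pairwise fun i j => IsCoprime (t i) (t j)) (hdvd : s ∣ ∏ j ∈ T, t j) :
    ∏ j ∈ T, Ideal.span {s, t j} = Ideal.span {s} := by
  apply le_antisymm
  · calc ∏ j ∈ T, Ideal.span {s, t j} ≤ Ideal.span {s, ∏ j ∈ T, t j} := prod_span_pair_le T s t
      _ = Ideal.span {s} := by
        rw [Ideal.span_insert, sup_eq_left]
        exact Ideal.span_singleton_le_span_singleton.mpr hdvd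
  · rw [Ideal.prod_eq_iInf_of_pairwise_isCoprime]
    · exact le_iInf₂ fun j _ => Ideal.span_mono (Set.singleton_subset_iff.mpr (Set.mem_insert _ _))
    · intro i hi j hj hij
      have hle : ∀ l, Ideal.span {t l} ≤ Ideal.span {s, t l} := fun l =>
        Ideal.span_mono (Set.singleton_subset_iff.mpr (Set.mem_insert_of_mem _ rfl))
      have h := Ideal.isCoprime_iff_sup_eq.mp
        ((Ideal.isCoprime_span_singleton_iff _ _).mpr (hcop hi hj hij))
      exact Ideal.isCoprime_iff_sup_eq.mpr (top_le_iff.mp (h ▸ sup_le_sup (hle i) (hle j)))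

lemma span_pair_pow_eq_span_singleton {s q y : R} {d : ℕ} (hd : 0 < d) (hy : y ^ d = s * q)
    (hsq : IsCoprime s q) : Ideal.span {s, y} ^ d = Ideal.span {s} := by
  apply le_antisymm
  · have hle := prod_span_pair_le (Finset.range d) s fun _ => y
    rw [Finset.prod_const, Finset.prod_const, Finset.card_range, hy] at hle
    refine hle.trans (Ideal.span_le.mpr ?_)
    rintro _ (rfl | rfl)
    · exact Ideal.mem_span_singleton_self _
    · exact Ideal.mem_span_singleton.mpr (dvd_mul_right s q)
  · obtain ⟨u, v, huv⟩ := hsq.pow_left (m := d - 1)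
    have hs : u * s ^ d + v * y ^ d = s := by
      rw [hy, ← mul_pow_sub_one hd.ne' s]
      linear_combination s * huv
    have hmem : ∀ r ∈ ({s, y} : Set R), r ^ d ∈ Ideal.span {s, y} ^ d := fun r hr =>
      Ideal.pow_mem_pow (Ideal.subset_span hr) d
    have hcomb := add_mem (Ideal.mul_mem_left _ u (hmem s (Set.mem_insert _ _)))
      (Ideal.mul_mem_left _ v (hmem y (Set.mem_insert_of_mem _ rfl)))
    rwa [hs, ← Ideal.span_singleton_le_iff_mem] at hcomb

end Ideal

section PowAddPow

variable {K : Type*} [Field K] {d : ℕ}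

lemma natDegree_eq_zero_of_isUnit_pow_sub_pow (hd : 2 ≤ d) {ζ : K} (hζ : IsPrimitiveRoot ζ d)
    {v w : K[X]} (h : IsUnit (w ^ d - v ^ d)) : v.natDegree = 0 := by
  have hone : IsUnit (w - v) := isUnit_of_dvd_unit (sub_dvd_pow_sub_pow w v d) h
  have hzeta : IsUnit (w - C ζ * v) := by
    refine isUnit_of_dvd_unit (sub_dvd_pow_sub_pow w (C ζ * v) d) ?_
    rwa [mul_pow, ← C_pow, hζ.pow_eq_one, C_1, one_mul]
  have hdiff : C (ζ - 1) * v = (w - v) - (w - C ζ * v) := by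
    rw [C_sub, C_1]
    ring
  have hζ1 : ζ - 1 ≠ 0 := sub_ne_zero.mpr (hζ.ne_one hd)
  rw [← natDegree_C_mul hζ1, hdiff, ← Nat.le_zero]
  exact natDegree_sub_le_of_le (natDegree_eq_zero_of_isUnit hone).le
    (natDegree_eq_zero_of_isUnit hzeta).le

lemma not_separable_X_sub_C_pow_add_C {p k : ℕ} [CharP K p] (hp : p ≠ 0) (hk : k ≠ 0) (a r : K) :
    ¬ ((X - C a) ^ p ^ k + C r).Separable := by
  intro hsep
  have hderiv : derivative ((X - C a) ^ p ^ k + C r) = 0 := by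
    simp [derivative_X_sub_C_pow, hk]
  rw [separable_def, hderiv, isCoprime_zero_right] at hsep
  have hdeg := natDegree_eq_zero_of_isUnit hsep
  rw [natDegree_add_C, (monic_X_sub_C a).natDegree_pow, natDegree_X_sub_C, mul_one] at hdeg
  exact pow_ne_zero k hp hdeg

lemma eq_of_pow_add_pow_eq_of_charP {p k : ℕ} [Fact p.Prime] [CharP K p] (hk : k ≠ 0) (hd : 2 ≤ d)
    {ζ : K} (hζ : IsPrimitiveRoot ζ d) {a b : K} {v w : K[X]}
    (hsep : ((X - C a) ^ p ^ k + v ^ d).Separable)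
    (h : (X - C a) ^ p ^ k + v ^ d = (X - C b) ^ p ^ k + w ^ d) : a = b := by
  by_contra hab
  have hconst : w ^ d - v ^ d = C ((b - a) ^ p ^ k) := by
    rw [sub_pow_char_pow, sub_pow_char_pow] at h
    rw [sub_pow_char_pow, C_sub, C_pow, C_pow]
    linear_combination -h
  have hunit : IsUnit (w ^ d - v ^ d) :=
    hconst ▸ ((pow_ne_zero _ (sub_ne_zero.mpr (Ne.symm hab))).isUnit.map C)
  have hv := natDegree_eq_zero_of_isUnit_pow_sub_pow hd hζ hunit
  obtain ⟨r, rfl⟩ := natDegree_eq_zero.mp hv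
  rw [← C_pow] at hsep
  exact not_separable_X_sub_C_pow_add_C (NeZero.ne p) hk a (r ^ d) hsep

lemma coeff_sub_one_X_sub_C_pow_add_pow {n : ℕ} (hdn : ¬ d ∣ n - 1) (a : K) {v : K[X]}
    (hv : d * v.natDegree < n) : ((X - C a) ^ n + v ^ d).coeff (n - 1) = -(n * a) := by
  have hpow : ((X - C a) ^ n).coeff (n - 1) = -(n * a) := by
    have hnext := (monic_X_sub_C a).nextCoeff_pow n
    rw [nextCoeff_of_natDegree_pos] at hnext
    all_goals rw [natDegree_pow, natDegree_X_sub_C, mul_one] at *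
    · rw [hnext, nextCoeff_X_sub_C, nsmul_eq_mul, mul_neg]
    · omega
  have hv' : (v ^ d).natDegree ≠ n - 1 := fun h => hdn ⟨v.natDegree, by rw [← h, natDegree_pow]⟩
  rw [coeff_add, hpow, coeff_eq_zero_of_natDegree_lt, add_zero]
  rw [natDegree_pow] at hv' ⊢
  omega

lemma eq_of_pow_add_pow_eq_of_not_dvd {n : ℕ} (hnK : (n : K) ≠ 0) (hdn : ¬ d ∣ n - 1) {a b : K}
    {v w : K[X]} (hv : d * v.natDegree < n) (hw : d * w.natDegree < n)
    (h : (X - C a) ^ n + v ^ d = (X - C b) ^ n + w ^ d) : a = b := by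
  have hcoeff := congrArg (coeff · (n - 1)) h
  simp only [coeff_sub_one_X_sub_C_pow_add_pow hdn _ hv,
    coeff_sub_one_X_sub_C_pow_add_pow hdn _ hw, neg_inj] at hcoeff
  exact mul_left_cancel₀ hnK hcoeff

end PowAddPow

namespace CurveRing

section PoleOrder

variable {K : Type*} [Field K] {d : ℕ} {f : K[X]}

/-- The function `x ^ e * y ^ i` on the curve. -/
noncomputable def monomial (d : ℕ) (f : K[X]) (e i : ℕ) : CurveRing K d f :=
  AdjoinRoot.of _ X ^ e * AdjoinRoot.root _ ^ i

/-- The order of the pole of `x ^ e * y ^ i` at the point at infinity: `x` has a pole of order `d`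
there, and `y` one of order `deg f`. -/
def weight (d : ℕ) (f : K[X]) (e i : ℕ) : ℕ :=
  d * e + f.natDegree * i

/-- The functions whose pole at infinity has order less than `k`, described as the span of the
monomials of weight less than `k`. -/
noncomputable def poleLT (d : ℕ) (f : K[X]) (k : ℕ) : Submodule K (CurveRing K d f) :=
  Submodule.span K {w | ∃ e i, weight d f e i < k ∧ monomial d f e i = w}

/-- The pole of `u` at infinity has order exactly `k`. -/
def HasPoleOrder (u : CurveRing K d f) (k : ℕ) : Prop :=
  u ∈ poleLT d f (k + 1) ∧ u ∉ poleLT d f k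

lemma root_pow : AdjoinRoot.root ((X : K[X][X]) ^ d - C f) ^ d = AdjoinRoot.of _ f := by
  simpa [sub_eq_zero] using AdjoinRoot.eval₂_root ((X : K[X][X]) ^ d - C f)

lemma weight_add (e i e' i' : ℕ) :
    weight d f (e + e') (i + i') = weight d f e i + weight d f e' i' := by
  simp only [weight]; ring

lemma monomial_mul (e i e' i' : ℕ) :
    monomial d f e i * monomial d f e' i' = monomial d f (e + e') (i + i') := by
  simp only [monomial, pow_add]; ring

lemma monomial_zero_right (e : ℕ) : monomial d f e 0 = AdjoinRoot.of _ (X ^ e) := by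
  simp [monomial]

lemma monomial_mem_poleLT {e i k : ℕ} (h : weight d f e i < k) :
    monomial d f e i ∈ poleLT d f k :=
  Submodule.subset_span ⟨e, i, h, rfl⟩

lemma poleLT_mono : Monotone (poleLT d f) := fun _ _ hkl =>
  Submodule.span_mono fun _ ⟨e, i, h, hw⟩ => ⟨e, i, h.trans_le hkl, hw⟩

lemma mul_mem_poleLT {k l : ℕ} {u v : CurveRing K d f} (hu : u ∈ poleLT d f (k + 1))
    (hv : v ∈ poleLT d f l) : u * v ∈ poleLT d f (k + l) := by
  have hle : poleLT d f (k + 1) * poleLT d f l ≤ poleLT d f (k + l) := by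
    unfold poleLT
    rw [Submodule.span_mul_span]
    refine Submodule.span_mono ?_
    rintro _ ⟨_, ⟨e, i, h, rfl⟩, _, ⟨e', i', h', rfl⟩, rfl⟩
    exact ⟨e + e', i + i', by rw [weight_add]; omega, (monomial_mul e i e' i').symm⟩
  exact hle (Submodule.mul_mem_mul hu hv)

lemma of_C_mul (t : K) (p : K[X]) :
    AdjoinRoot.of ((X : K[X][X]) ^ d - C f) (C t * p) = t • AdjoinRoot.of _ p := by
  rw [map_mul, Algebra.smul_def]; rfl

lemma HasPoleOrder.unique {k l : ℕ} {u : CurveRing K d f} (hk : HasPoleOrder u k)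
    (hl : HasPoleOrder u l) : k = l := by
  by_contra hne
  rcases Nat.lt_or_gt_of_ne hne with h | h
  · exact hl.2 (poleLT_mono h hk.1)
  · exact hk.2 (poleLT_mono h hl.1)

lemma HasPoleOrder.ne_zero {k : ℕ} {u : CurveRing K d f} (hu : HasPoleOrder u k) : u ≠ 0 := by
  rintro rfl
  exact hu.2 (zero_mem _)

lemma poleLT_zero : poleLT d f 0 = ⊥ := by
  simp [poleLT]

lemma exists_of_eq_of_mem_poleLT_natDegree (hn : 0 < f.natDegree) {u : CurveRing K d f}
    (hu : u ∈ poleLT d f f.natDegree) :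
    ∃ v : K[X], d * v.natDegree < f.natDegree ∧ AdjoinRoot.of _ v = u := by
  induction hu using Submodule.span_induction with
  | mem _ hw =>
    obtain ⟨e, i, h, rfl⟩ := hw
    obtain rfl : i = 0 := by
      by_contra hi
      have := Nat.le_mul_of_pos_right f.natDegree (Nat.pos_of_ne_zero hi)
      unfold weight at h
      omega
    exact ⟨X ^ e, by simpa [weight] using h, (monomial_zero_right e).symm⟩
  | zero => exact ⟨0, by simpa using hn, map_zero _⟩
  | add _ _ _ _ hx hy =>
    obtain ⟨v, hv, rfl⟩ := hx
    obtain ⟨w, hw, rfl⟩ := hy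
    refine ⟨v + w, ?_, map_add _ _ _⟩
    calc d * (v + w).natDegree ≤ d * max v.natDegree w.natDegree :=
          Nat.mul_le_mul_left d (natDegree_add_le v w)
      _ < f.natDegree := by rw [← Nat.mul_max_mul_left]; exact max_lt hv hw
  | smul t _ _ hx =>
    obtain ⟨v, hv, rfl⟩ := hx
    exact ⟨C t * v, (Nat.mul_le_mul_left d (natDegree_C_mul_le t v)).trans_lt hv, of_C_mul t v⟩

variable [NeZero d]

lemma of_mem_poleLT {p : K[X]} {m : ℕ} (hp : p.degree < m) :
    AdjoinRoot.of _ p ∈ poleLT d f (d * m) := by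
  rw [p.as_sum_support_C_mul_X_pow, map_sum]
  refine Submodule.sum_mem _ fun e he => ?_
  have hem : e < m := by exact_mod_cast (le_degree_of_mem_supp e he).trans_lt hp
  rw [of_C_mul, ← monomial_zero_right]
  refine Submodule.smul_mem _ _ (monomial_mem_poleLT ?_)
  simpa only [weight, mul_zero, add_zero] using Nat.mul_lt_mul_of_pos_left hem (NeZero.pos d)

lemma exists_mem_poleLT (u : CurveRing K d f) : ∃ k, u ∈ poleLT d f k := by
  induction u using AdjoinRoot.induction_on with | ih p => ?_
  induction p using Polynomial.induction_on' with
  | add p q hp hq =>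
    obtain ⟨k, hk⟩ := hp
    obtain ⟨l, hl⟩ := hq
    refine ⟨max k l, ?_⟩
    rw [map_add]
    exact add_mem (poleLT_mono (le_max_left k l) hk) (poleLT_mono (le_max_right k l) hl)
  | monomial i p =>
    have hp : AdjoinRoot.of _ p ∈ poleLT d f (d * (p.natDegree + 1)) :=
      of_mem_poleLT (mod_cast degree_lt_iff_coeff_zero _ _ |>.mpr fun m hm =>
        coeff_eq_zero_of_natDegree_lt hm)
    have hy : monomial d f 0 i ∈ poleLT d f (weight d f 0 i + 1) :=
      monomial_mem_poleLT (Nat.lt_succ_self _)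
    refine ⟨weight d f 0 i + d * (p.natDegree + 1), ?_⟩
    rw [← C_mul_X_pow_eq_monomial, map_mul, AdjoinRoot.mk_C, map_pow, AdjoinRoot.mk_X,
      mul_comm (AdjoinRoot.of _ p)]
    simpa only [monomial, pow_zero, one_mul] using mul_mem_poleLT hy hp

/-- The `K`-linear map sending `x ^ e * y ^ i`, for `i < d`, to `T ^ weight d f e i`. The degree of
the image bounds the order of the pole at infinity from below. -/
noncomputable def leadingForm (d : ℕ) [NeZero d] (f : K[X]) : CurveRing K d f →ₗ[K] K[X] :=
  (eval₂AlgHom (expand K d) (X ^ f.natDegree) fun _ => Commute.all _ _).toLinearMap ∘ₗ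
    (AdjoinRoot.modByMonicHom (monic_X_pow_sub_C f (NeZero.ne d))).restrictScalars K

lemma leadingForm_monomial (e i : ℕ) :
    leadingForm d f (monomial d f e i) =
      expand K d (X ^ e * f ^ (i / d)) * (X ^ f.natDegree) ^ (i % d) := by
  have hreduced : monomial d f e i =
      AdjoinRoot.mk _ (C (X ^ e * f ^ (i / d)) * X ^ (i % d)) := by
    rw [monomial, map_mul, map_pow, AdjoinRoot.mk_X, AdjoinRoot.mk_C, map_mul, map_pow, map_pow,
      ← root_pow, mul_assoc, ← pow_mul, ← pow_add, Nat.div_add_mod]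
  have hdegree :
      (C (X ^ e * f ^ (i / d)) * X ^ (i % d)).degree < ((X : K[X][X]) ^ d - C f).degree := by
    rw [degree_X_pow_sub_C (NeZero.pos d)]
    exact (degree_C_mul_X_pow_le _ _).trans_lt (mod_cast Nat.mod_lt _ (NeZero.pos d))
  have hmod := (modByMonic_eq_self_iff (monic_X_pow_sub_C f (NeZero.ne d))).mpr hdegree
  simp only [leadingForm, LinearMap.comp_apply, LinearMap.restrictScalars_apply, hreduced,
    AdjoinRoot.modByMonicHom_mk, hmod,
    AlgHom.toLinearMap_apply, eval₂AlgHom_apply, eval₂_mul, eval₂_C, eval₂_X_pow, RingHom.coe_coe]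

lemma monic_leadingForm_monomial (hf : f.Monic) (e i : ℕ) :
    (leadingForm d f (monomial d f e i)).Monic := by
  rw [leadingForm_monomial]
  exact (((monic_X_pow e).mul (hf.pow _)).expand (NeZero.pos d)).mul ((monic_X_pow _).pow _)

lemma natDegree_leadingForm_monomial (hf : f.Monic) (e i : ℕ) :
    (leadingForm d f (monomial d f e i)).natDegree = weight d f e i := by
  have hi := Nat.div_add_mod i d
  rw [leadingForm_monomial, Monic.natDegree_mul (((monic_X_pow e).mul (hf.pow _)).expand
    (NeZero.pos d)) ((monic_X_pow _).pow _), natDegree_expand,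
    (monic_X_pow e).natDegree_mul (hf.pow _), hf.natDegree_pow, ← pow_mul, natDegree_X_pow,
    natDegree_X_pow, weight]
  linear_combination f.natDegree * hi

lemma degree_leadingForm_lt (hf : f.Monic) {k : ℕ} {u : CurveRing K d f}
    (hu : u ∈ poleLT d f k) : (leadingForm d f u).degree < k := by
  have hle : poleLT d f k ≤ (degreeLT K k).comap (leadingForm d f) := by
    refine Submodule.span_le.mpr ?_
    rintro _ ⟨e, i, h, rfl⟩
    rw [SetLike.mem_coe, Submodule.mem_comap, mem_degreeLT]
    exact degree_le_natDegree.trans_lt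
      (mod_cast (natDegree_leadingForm_monomial hf e i).trans_lt h)
  exact mem_degreeLT.mp (hle hu)

lemma hasPoleOrder_monomial (hf : f.Monic) (e i : ℕ) :
    HasPoleOrder (monomial d f e i) (weight d f e i) := by
  refine ⟨monomial_mem_poleLT (Nat.lt_succ_self _), fun hmem => ?_⟩
  have hlt := degree_leadingForm_lt hf hmem
  rw [degree_eq_natDegree (monic_leadingForm_monomial hf e i).ne_zero,
    natDegree_leadingForm_monomial hf] at hlt
  exact lt_irrefl _ hlt

lemma of_sub_monomial_mem_poleLT {p : K[X]} (hp : p.Monic) :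
    AdjoinRoot.of _ p - monomial d f p.natDegree 0 ∈ poleLT d f (d * p.natDegree) := by
  rw [monomial_zero_right, ← map_sub]
  refine of_mem_poleLT ?_
  rw [← degree_eq_natDegree hp.ne_zero]
  refine degree_sub_lt_left ?_ hp.ne_zero ?_
  · rw [degree_X_pow, degree_eq_natDegree hp.ne_zero]
  · rw [hp.leadingCoeff, (monic_X_pow _).leadingCoeff]

/-- By coprimality of `d` and `deg f`, two monomials of the same weight differ by trading
`y ^ (d * s) = f ^ s` for `x ^ (deg f * s)`. -/
lemma monomial_sub_monomial_mem_poleLT (hf : f.Monic) (hcop : f.natDegree.Coprime d)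
    {e i e' i' : ℕ} (h : weight d f e i = weight d f e' i') :
    monomial d f e i - monomial d f e' i' ∈ poleLT d f (weight d f e i) := by
  wlog hii' : i ≤ i' generalizing e i e' i'
  · have hswap := neg_mem (this h.symm (le_of_not_ge hii'))
    rwa [neg_sub, ← h] at hswap
  obtain ⟨s, hs⟩ : d ∣ i' - i := by
    refine hcop.symm.dvd_of_dvd_mul_left ((Nat.dvd_add_right (dvd_mul_right d e')).mp ⟨e, ?_⟩)
    simp only [weight] at h
    zify [hii'] at h ⊢
    linear_combination -h
  obtain rfl : i' = i + d * s := by omega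
  obtain rfl : e = e' + s * f.natDegree := by
    apply Nat.eq_of_mul_eq_mul_left (NeZero.pos d)
    simp only [weight] at h
    linear_combination h
  have hpow : AdjoinRoot.of _ (f ^ s) - monomial d f (s * f.natDegree) 0 ∈
      poleLT d f (d * (s * f.natDegree)) := by
    simpa only [hf.natDegree_pow] using of_sub_monomial_mem_poleLT (hf.pow s)
  have hfactor : monomial d f (e' + s * f.natDegree) i - monomial d f e' (i + d * s) =
      - (monomial d f e' i *
        (AdjoinRoot.of _ (f ^ s) - monomial d f (s * f.natDegree) 0)) := by
    rw [mul_sub, monomial_mul, add_zero, map_pow, ← root_pow]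
    simp only [monomial]
    ring
  have hweight : weight d f (e' + s * f.natDegree) i =
      weight d f e' i + d * (s * f.natDegree) := by
    simp only [weight]; ring
  rw [hfactor, hweight]
  exact neg_mem (mul_mem_poleLT (monomial_mem_poleLT (Nat.lt_succ_self _)) hpow)

lemma HasPoleOrder.exists_leadingTerm (hf : f.Monic) (hcop : f.natDegree.Coprime d) {k : ℕ}
    {u : CurveRing K d f} (hu : HasPoleOrder u k) :
    ∃ t : K, t ≠ 0 ∧ ∃ e i, weight d f e i = k ∧ u - t • monomial d f e i ∈ poleLT d f k := by
  obtain ⟨e, i, rfl⟩ : ∃ e i, weight d f e i = k := by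
    by_contra! hne
    refine hu.2 (Submodule.span_mono ?_ hu.1)
    rintro _ ⟨e, i, h, rfl⟩
    exact ⟨e, i, lt_of_le_of_ne (Nat.lt_succ_iff.mp h) (hne e i), rfl⟩
  have hle : poleLT d f (weight d f e i + 1) ≤
      poleLT d f (weight d f e i) ⊔ Submodule.span K {monomial d f e i} := by
    refine Submodule.span_le.mpr ?_
    rintro _ ⟨e', i', h, rfl⟩
    rcases (Nat.lt_succ_iff.mp h).lt_or_eq with hlt | heq
    · exact Submodule.mem_sup_left (monomial_mem_poleLT hlt)
    · rw [← sub_add_cancel (monomial d f e' i') (monomial d f e i), ← heq]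
      exact Submodule.add_mem_sup (monomial_sub_monomial_mem_poleLT hf hcop heq)
        (Submodule.mem_span_singleton_self _)
  obtain ⟨u', hu', w, hw, rfl⟩ := Submodule.mem_sup.mp (hle hu.1)
  obtain ⟨t, rfl⟩ := Submodule.mem_span_singleton.mp hw
  refine ⟨t, ?_, e, i, rfl, by rwa [add_sub_cancel_right]⟩
  rintro rfl
  exact hu.2 (by rwa [zero_smul, add_zero])

lemma hasPoleOrder_of_sub_mem (hf : f.Monic) {t : K} (ht : t ≠ 0) {e i : ℕ}
    {u : CurveRing K d f} (hu : u - t • monomial d f e i ∈ poleLT d f (weight d f e i)) :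
    HasPoleOrder u (weight d f e i) := by
  obtain ⟨hmem, hnotMem⟩ := hasPoleOrder_monomial (d := d) hf e i
  constructor
  · exact (Submodule.sub_mem_iff_left _ (Submodule.smul_mem _ t hmem)).mp
      (poleLT_mono (Nat.le_succ _) hu)
  · intro hu'
    exact hnotMem ((Submodule.smul_mem_iff _ ht).mp ((Submodule.sub_mem_iff_right _ hu').mp hu))

lemma HasPoleOrder.mul (hf : f.Monic) (hcop : f.natDegree.Coprime d) {k l : ℕ}
    {u v : CurveRing K d f} (hu : HasPoleOrder u k) (hv : HasPoleOrder v l) :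
    HasPoleOrder (u * v) (k + l) := by
  obtain ⟨t, ht, e, i, rfl, htail⟩ := hu.exists_leadingTerm hf hcop
  obtain ⟨s, hs, e', i', rfl, htail'⟩ := hv.exists_leadingTerm hf hcop
  rw [← weight_add]
  refine hasPoleOrder_of_sub_mem hf (mul_ne_zero ht hs) ?_
  have hdecomp : u * v - (t * s) • monomial d f (e + e') (i + i') =
      u * (v - s • monomial d f e' i') +
        (s • monomial d f e' i') * (u - t • monomial d f e i) := by
    rw [← monomial_mul, Algebra.smul_def, Algebra.smul_def, Algebra.smul_def, map_mul]
    ring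
  rw [hdecomp, weight_add]
  refine add_mem (mul_mem_poleLT hu.1 htail') ?_
  rw [add_comm]
  exact mul_mem_poleLT (Submodule.smul_mem _ _ (monomial_mem_poleLT (Nat.lt_succ_self _))) htail

lemma exists_hasPoleOrder {u : CurveRing K d f} (hu : u ≠ 0) : ∃ k, HasPoleOrder u k := by
  classical
  have hmem := Nat.find_spec (exists_mem_poleLT u)
  obtain ⟨k, hk⟩ : ∃ k, Nat.find (exists_mem_poleLT u) = k + 1 := by
    refine Nat.exists_eq_succ_of_ne_zero fun h => hu ?_
    rwa [h, poleLT_zero, Submodule.mem_bot] at hmem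
  exact ⟨k, hk ▸ hmem, Nat.find_min (exists_mem_poleLT u) (hk ▸ Nat.lt_succ_self k)⟩

lemma hasPoleOrder_of_monic (hf : f.Monic) {p : K[X]} (hp : p.Monic) :
    HasPoleOrder (AdjoinRoot.of ((X : K[X][X]) ^ d - C f) p) (d * p.natDegree) := by
  simpa [weight] using hasPoleOrder_of_sub_mem (d := d) (e := p.natDegree) (i := 0) hf one_ne_zero
    (by simpa [weight] using of_sub_monomial_mem_poleLT hp)

lemma hasPoleOrder_one (hf : f.Monic) : HasPoleOrder (1 : CurveRing K d f) 0 := by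
  simpa using hasPoleOrder_of_monic (d := d) hf monic_one

lemma HasPoleOrder.prod (hf : f.Monic) (hcop : f.natDegree.Coprime d) {ι : Type*} (s : Finset ι)
    {k : ι → ℕ} {u : ι → CurveRing K d f} (hu : ∀ j ∈ s, HasPoleOrder (u j) (k j)) :
    HasPoleOrder (∏ j ∈ s, u j) (∑ j ∈ s, k j) := by
  classical
  induction s using Finset.induction_on with
  | empty => simpa using hasPoleOrder_one hf
  | insert j s hj ih =>
    rw [Finset.prod_insert hj, Finset.sum_insert hj]
    exact (hu j (s.mem_insert_self j)).mul hf hcop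
      (ih fun l hl => hu l (Finset.mem_insert_of_mem hl))

lemma isDomain (hf : f.Monic) (hcop : f.natDegree.Coprime d) : IsDomain (CurveRing K d f) := by
  have : Nontrivial (CurveRing K d f) := ⟨1, 0, (hasPoleOrder_one hf).ne_zero⟩
  have : NoZeroDivisors (CurveRing K d f) := by
    refine ⟨fun {u v} huv => ?_⟩
    by_contra! hne
    obtain ⟨k, hk⟩ := exists_hasPoleOrder hne.1
    obtain ⟨l, hl⟩ := exists_hasPoleOrder hne.2
    exact (hk.mul hf hcop hl).ne_zero huv
  exact NoZeroDivisors.to_isDomain _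

lemma hasPoleOrder_zero_of_isUnit (hf : f.Monic) (hcop : f.natDegree.Coprime d)
    {u : CurveRing K d f} (hu : IsUnit u) : HasPoleOrder u 0 := by
  have := isDomain hf hcop
  obtain ⟨v, huv⟩ := hu.exists_right_inv
  obtain ⟨k, hk⟩ := exists_hasPoleOrder hu.ne_zero
  obtain ⟨l, hl⟩ := exists_hasPoleOrder (right_ne_zero_of_mul_eq_one huv)
  have hsum : k + l = 0 := (huv ▸ hk.mul hf hcop hl).unique (hasPoleOrder_one hf)
  rwa [Nat.eq_zero_of_add_eq_zero_right hsum] at hk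

lemma HasPoleOrder.of_associated (hf : f.Monic) (hcop : f.natDegree.Coprime d) {k : ℕ}
    {u v : CurveRing K d f} (hu : HasPoleOrder u k) (huv : Associated u v) :
    HasPoleOrder v k := by
  obtain ⟨w, rfl⟩ := huv
  simpa only [add_zero] using hu.mul hf hcop (hasPoleOrder_zero_of_isUnit hf hcop w.isUnit)

end PoleOrder

section Conjugation

variable {K : Type*} [Field K] {d : ℕ} {f : K[X]}

/-- The automorphism `y ↦ z⁻¹ * y` over `K[X]` attached to a `d`-th root of unity `z`. The inverse
makes it carry the ideal of a point `(a, c)` to that of `(a, z * c)`. -/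
noncomputable def conj (z : rootsOfUnity d K) : CurveRing K d f →ₐ[K[X]] CurveRing K d f :=
  AdjoinRoot.liftAlgHom _ (Algebra.ofId _ _)
    (AdjoinRoot.of _ (C ((z : Kˣ) : K)⁻¹) * AdjoinRoot.root _) (by
      have hz : ((z : Kˣ) : K) ^ d = 1 := (mem_rootsOfUnity' d _).mp z.2
      simp [mul_pow, root_pow, ← map_pow, hz])

lemma conj_of (z : rootsOfUnity d K) (p : K[X]) :
    conj z (AdjoinRoot.of ((X : K[X][X]) ^ d - C f) p) = AdjoinRoot.of _ p :=
  (conj z).commutes p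

lemma conj_root (z : rootsOfUnity d K) :
    conj z (AdjoinRoot.root ((X : K[X][X]) ^ d - C f)) =
      AdjoinRoot.of _ (C ((z : Kˣ) : K)⁻¹) * AdjoinRoot.root _ :=
  AdjoinRoot.liftAlgHom_root _ _ _ _

lemma conj_inv_conj (z : rootsOfUnity d K) (u : CurveRing K d f) : conj z⁻¹ (conj z u) = u := by
  have hcomp : (conj z⁻¹).comp (conj z) = AlgHom.id K[X] (CurveRing K d f) := by
    refine AdjoinRoot.algHom_ext ?_
    rw [AlgHom.comp_apply, conj_root, map_mul, conj_of, conj_root, ← mul_assoc, ← map_mul, ← C_mul]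
    simp
  exact DFunLike.congr_fun hcomp u

lemma conj_mem_poleLT (z : rootsOfUnity d K) {k : ℕ} {u : CurveRing K d f}
    (hu : u ∈ poleLT d f k) : conj z u ∈ poleLT d f k := by
  have hle : poleLT d f k ≤ (poleLT d f k).comap ((conj z).toLinearMap.restrictScalars K) := by
    refine Submodule.span_le.mpr ?_
    rintro _ ⟨e, i, h, rfl⟩
    have hconj : conj z (monomial d f e i) =
        ((z : Kˣ) : K)⁻¹ ^ i • monomial d f e i := by
      rw [monomial, map_mul, map_pow, conj_of, map_pow, conj_root, mul_pow, mul_left_comm,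
        ← map_pow, ← C_pow, Algebra.smul_def]
      rfl
    exact (congrArg (· ∈ poleLT d f k) hconj).mpr
      (Submodule.smul_mem _ _ (monomial_mem_poleLT h))
  exact hle hu

lemma HasPoleOrder.conj (z : rootsOfUnity d K) {k : ℕ} {u : CurveRing K d f}
    (hu : HasPoleOrder u k) : HasPoleOrder (conj z u) k :=
  ⟨conj_mem_poleLT z hu.1, fun h => hu.2 (conj_inv_conj z u ▸ conj_mem_poleLT z⁻¹ h)⟩

lemma conj_root_sub_of (z : rootsOfUnity d K) (v : K[X]) :
    conj z (AdjoinRoot.root ((X : K[X][X]) ^ d - C f) - AdjoinRoot.of _ v) =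
      AdjoinRoot.of _ (C ((z : Kˣ) : K)⁻¹) *
        (AdjoinRoot.root _ - AdjoinRoot.of _ (C ((z : Kˣ) : K) * v)) := by
  rw [map_sub, conj_of, conj_root, mul_sub, ← map_mul, ← mul_assoc, ← C_mul]
  simp

lemma isUnit_of_C {t : K} (ht : t ≠ 0) :
    IsUnit (AdjoinRoot.of ((X : K[X][X]) ^ d - C f) (C t)) :=
  (ht.isUnit.map C).map _

lemma span_conj_root_sub_of (z : rootsOfUnity d K) (v : K[X]) :
    Ideal.span {conj z (AdjoinRoot.root ((X : K[X][X]) ^ d - C f) - AdjoinRoot.of _ v)} =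
      Ideal.span {AdjoinRoot.root _ - AdjoinRoot.of _ (C ((z : Kˣ) : K) * v)} := by
  rw [conj_root_sub_of,
    Ideal.span_singleton_mul_left_unit (isUnit_of_C (inv_ne_zero (Units.ne_zero _)))]

lemma map_conj_ptIdeal (z : rootsOfUnity d K) (a c : K) :
    (ptIdeal d f a c).map (conj z) = ptIdeal d f a ((z : Kˣ) * c) := by
  rw [ptIdeal, ptIdeal, Ideal.map_span, Set.image_pair, Ideal.span_insert, Ideal.span_insert,
    conj_of, span_conj_root_sub_of, C_mul]

lemma isPrincipal_ptIdeal_pow_mul (z : rootsOfUnity d K) {a c : K} {k : ℕ}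
    (h : (ptIdeal d f a c ^ k).IsPrincipal) :
    (ptIdeal d f a ((z : Kˣ) * c) ^ k).IsPrincipal := by
  rw [← map_conj_ptIdeal, ← Ideal.map_pow]
  exact h.map_ringHom (conj z)

lemma isTorsionOfOrder_mul (z : rootsOfUnity d K) {a c : K} {m : ℕ}
    (h : IsTorsionOfOrder d f a c m) : IsTorsionOfOrder d f a ((z : Kˣ) * c) m := by
  refine ⟨⟨h.1.1, isPrincipal_ptIdeal_pow_mul z h.1.2⟩, fun k hk => h.2 ⟨hk.1, ?_⟩⟩
  simpa using isPrincipal_ptIdeal_pow_mul z⁻¹ hk.2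

variable [NeZero d]

lemma prod_root_sub_of (hf : f.Monic) (hcop : f.natDegree.Coprime d)
    [Fintype (rootsOfUnity d K)] {ζ : K} (hζ : IsPrimitiveRoot ζ d) (v : K[X]) :
    ∏ z : rootsOfUnity d K, (AdjoinRoot.root ((X : K[X][X]) ^ d - C f) -
      AdjoinRoot.of _ (C ((z : Kˣ) : K) * v)) = AdjoinRoot.of _ (f - v ^ d) := by
  classical
  have := isDomain hf hcop
  have hinj := (algebraMap K (CurveRing K d f)).injective
  have hζ' := hζ.map_of_injective hinj
  let emb (z : rootsOfUnity d K) : CurveRing K d f := algebraMap K _ ((z : Kˣ) : K)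
  have hemb : Function.Injective emb := fun z w h => Subtype.ext (Units.ext (hinj h))
  have himage : Finset.univ.image emb = nthRootsFinset d 1 := by
    refine Finset.eq_of_subset_of_card_le (fun x hx => ?_) ?_
    · obtain ⟨z, -, rfl⟩ := Finset.mem_image.mp hx
      have hz : ((z : Kˣ) : K) ^ d = 1 := (mem_rootsOfUnity' d _).mp z.2
      rw [mem_nthRootsFinset (NeZero.pos d), ← map_pow, hz, map_one]
    · rw [hζ'.card_nthRootsFinset, Finset.card_image_of_injective _ hemb, Finset.card_univ,
        ← Nat.card_eq_fintype_card, hζ.card_rootsOfUnity]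
  rw [map_sub, map_pow, ← root_pow, hζ'.pow_sub_pow_eq_prod_sub_mul _ _ (NeZero.pos d), ← himage,
    Finset.prod_image hemb.injOn]
  simp only [map_mul]
  rfl

lemma of_dvd_of_iff {p q : K[X]} :
    AdjoinRoot.of ((X : K[X][X]) ^ d - C f) p ∣ AdjoinRoot.of _ q ↔ p ∣ q := by
  have := (monic_X_pow_sub_C f (NeZero.ne d)).free_adjoinRoot
  have := AdjoinRoot.nontrivial ((X : K[X][X]) ^ d - C f) <| by
    rw [degree_X_pow_sub_C (NeZero.pos d)]
    exact_mod_cast NeZero.ne d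
  have hcomap := Ideal.comap_map_eq_self_of_faithfullyFlat (B := CurveRing K d f) (Ideal.span {p})
  rw [Ideal.map_span, Set.image_singleton] at hcomap
  rw [← Ideal.mem_span_singleton, ← Ideal.mem_span_singleton, ← hcomap, Ideal.mem_comap]
  rfl

lemma eq_of_associated_of {p q : K[X]} (hp : p.Monic) (hq : q.Monic)
    (h : Associated (AdjoinRoot.of ((X : K[X][X]) ^ d - C f) p) (AdjoinRoot.of _ q)) : p = q :=
  eq_of_monic_of_associated hp hq
    (associated_of_dvd_dvd (of_dvd_of_iff.mp h.dvd) (of_dvd_of_iff.mp h.symm.dvd))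

lemma prod_ptIdeal (hf : f.Monic) (hcop : f.natDegree.Coprime d) [Fintype (rootsOfUnity d K)]
    {ζ : K} (hζ : IsPrimitiveRoot ζ d) {a c : K} (hc : c ≠ 0) (hac : c ^ d = f.eval a) :
    ∏ z : rootsOfUnity d K, ptIdeal d f a ((z : Kˣ) * c) =
      Ideal.span {AdjoinRoot.of _ (X - C a)} := by
  refine prod_span_pair_eq_span_singleton (fun z _ w _ hzw => ?_) ?_
  · have hunit := isUnit_of_C (d := d) (f := f) (mul_ne_zero (sub_ne_zero.mpr fun h =>
      hzw (Subtype.ext (Units.ext h.symm))) hc : ((w : Kˣ) - (z : Kˣ) : K) * c ≠ 0)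
    obtain ⟨r, hr⟩ := hunit.exists_left_inv
    refine ⟨r, -r, ?_⟩
    rw [← hr, sub_mul, C_sub, map_sub]
    ring
  · simp only [C_mul, prod_root_sub_of hf hcop hζ]
    refine map_dvd _ (dvd_iff_isRoot.mpr ?_)
    simp [hac]

lemma ptIdeal_pow_eq_span_of_isRoot (hsep : f.Separable) {a : K} (ha : f.IsRoot a) :
    ptIdeal d f a 0 ^ d = Ideal.span {AdjoinRoot.of _ (X - C a)} := by
  obtain ⟨q, rfl⟩ := dvd_iff_isRoot.mpr ha
  rw [ptIdeal, C_0, map_zero, sub_zero]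
  refine span_pair_pow_eq_span_singleton (NeZero.pos d) (root_pow.trans (map_mul _ _ q)) ?_
  exact hsep.isCoprime.map _

lemma ne_zero_of_isTorsionOfOrder (hsep : f.Separable) {a c : K} {m : ℕ} (hdm : d < m)
    (hac : c ^ d = f.eval a) (h : IsTorsionOfOrder d f a c m) : c ≠ 0 := by
  rintro rfl
  refine hdm.not_ge (h.2 ⟨NeZero.pos d, ?_⟩)
  rw [ptIdeal_pow_eq_span_of_isRoot hsep (by rw [IsRoot.def, ← hac, zero_pow (NeZero.ne d)])]
  exact ⟨_, rfl⟩

lemma span_prod_conj (hf : f.Monic) (hcop : f.natDegree.Coprime d) [Fintype (rootsOfUnity d K)]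
    {ζ : K} (hζ : IsPrimitiveRoot ζ d) {a c : K} (hc : c ≠ 0) (hac : c ^ d = f.eval a)
    {m : ℕ} {h : CurveRing K d f} (hgen : ptIdeal d f a c ^ m = Ideal.span {h}) :
    Ideal.span {∏ z : rootsOfUnity d K, conj z h} =
      Ideal.span {AdjoinRoot.of _ ((X - C a) ^ m)} := by
  calc Ideal.span {∏ z : rootsOfUnity d K, conj z h}
      = ∏ z : rootsOfUnity d K, (Ideal.span {h}).map (conj z) := by
        simp only [Ideal.map_span, Set.image_singleton, Ideal.prod_span_singleton]
    _ = (∏ z : rootsOfUnity d K, ptIdeal d f a ((z : Kˣ) * c)) ^ m := by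
        simp only [← hgen, Ideal.map_pow, map_conj_ptIdeal, Finset.prod_pow]
    _ = Ideal.span {AdjoinRoot.of _ ((X - C a) ^ m)} := by
        rw [prod_ptIdeal hf hcop hζ hc hac, Ideal.span_singleton_pow, map_pow]

lemma hasPoleOrder_of_ptIdeal_pow_eq_span (hf : f.Monic) (hcop : f.natDegree.Coprime d)
    {ζ : K} (hζ : IsPrimitiveRoot ζ d) {a c : K} (hc : c ≠ 0) (hac : c ^ d = f.eval a)
    {m : ℕ} {h : CurveRing K d f} (hgen : ptIdeal d f a c ^ m = Ideal.span {h}) :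
    HasPoleOrder h m := by
  have := isDomain hf hcop
  have := Fintype.ofFinite (rootsOfUnity d K)
  have hassoc := Ideal.span_singleton_eq_span_singleton.mp (span_prod_conj hf hcop hζ hc hac hgen)
  have hmonic : ((X - C a) ^ m).Monic := (monic_X_sub_C a).pow m
  have hnorm := (hasPoleOrder_of_monic hf hmonic).of_associated hf hcop hassoc.symm
  rw [(monic_X_sub_C a).natDegree_pow, natDegree_X_sub_C, mul_one] at hnorm
  obtain ⟨k, hk⟩ : ∃ k, HasPoleOrder h k := by
    refine exists_hasPoleOrder fun h0 => hnorm.ne_zero ?_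
    simp [h0]
  have hsum := (HasPoleOrder.prod hf hcop Finset.univ fun z _ => hk.conj z).unique hnorm
  rw [Finset.sum_const, Finset.card_univ, ← Nat.card_eq_fintype_card, hζ.card_rootsOfUnity,
    smul_eq_mul] at hsum
  rwa [Nat.eq_of_mul_eq_mul_left (NeZero.pos d) hsum] at hk

lemma HasPoleOrder.exists_eq_smul_root_sub (hf : f.Monic) (hcop : f.natDegree.Coprime d)
    (hd : 2 ≤ d) {h : CurveRing K d f} (hh : HasPoleOrder h f.natDegree) :
    ∃ t : K, t ≠ 0 ∧ ∃ v : K[X], d * v.natDegree < f.natDegree ∧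
      h = t • (AdjoinRoot.root _ - AdjoinRoot.of _ v) := by
  have hn : 0 < f.natDegree := Nat.pos_of_ne_zero fun h0 => by
    rw [h0, Nat.coprime_zero_left] at hcop
    omega
  obtain ⟨t, ht, e, i, hweight, htail⟩ := hh.exists_leadingTerm hf hcop
  obtain ⟨rfl, rfl⟩ : e = 0 ∧ i = 1 := by
    unfold weight at hweight
    have hi : i ≠ 0 := by
      rintro rfl
      have hdvd : d ∣ f.natDegree := ⟨e, by omega⟩
      have := Nat.eq_one_of_dvd_coprimes hcop hdvd dvd_rfl
      omega
    have hi' : i = 1 := by nlinarith [Nat.pos_of_ne_zero hi, Nat.zero_le (d * e)]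
    subst hi'
    have hde : d * e = 0 := by omega
    exact ⟨(Nat.mul_eq_zero.mp hde).resolve_left (NeZero.ne d), rfl⟩
  obtain ⟨v, hv, hvh⟩ := exists_of_eq_of_mem_poleLT_natDegree hn htail
  refine ⟨t, ht, C (-t⁻¹) * v, ?_, ?_⟩
  · rwa [natDegree_C_mul (neg_ne_zero.mpr (inv_ne_zero ht))]
  · rw [of_C_mul, hvh, neg_smul, sub_neg_eq_add, smul_add, smul_inv_smul₀ ht]
    simp [monomial]

theorem exists_eq_pow_add_pow (hf : f.Monic) (hcop : f.natDegree.Coprime d) (hd : 2 ≤ d)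
    {ζ : K} (hζ : IsPrimitiveRoot ζ d) {a c : K} (hc : c ≠ 0) (hac : c ^ d = f.eval a)
    (hprin : (ptIdeal d f a c ^ f.natDegree).IsPrincipal) :
    ∃ v : K[X], d * v.natDegree < f.natDegree ∧ f = (X - C a) ^ f.natDegree + v ^ d := by
  have := isDomain hf hcop
  have := Fintype.ofFinite (rootsOfUnity d K)
  obtain ⟨h, hgen⟩ := hprin
  have hpole := hasPoleOrder_of_ptIdeal_pow_eq_span hf hcop hζ hc hac hgen
  obtain ⟨t, ht, v, hv, rfl⟩ := hpole.exists_eq_smul_root_sub hf hcop hd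
  refine ⟨v, hv, sub_eq_iff_eq_add.mp ?_⟩
  have hgen' : ptIdeal d f a c ^ f.natDegree =
      Ideal.span {AdjoinRoot.root _ - AdjoinRoot.of _ v} := by
    rw [hgen, Algebra.smul_def]
    exact Ideal.span_singleton_mul_left_unit (isUnit_of_C ht) _
  have hspan := span_prod_conj hf hcop hζ hc hac hgen'
  rw [← Ideal.prod_span_singleton] at hspan
  simp only [span_conj_root_sub_of] at hspan
  rw [Ideal.prod_span_singleton, prod_root_sub_of hf hcop hζ] at hspan
  refine eq_of_associated_of ?_ ((monic_X_sub_C a).pow _)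
    (Ideal.span_singleton_eq_span_singleton.mp hspan)
  refine hf.sub_of_left (lt_of_le_of_lt degree_le_natDegree ?_)
  rw [natDegree_pow, degree_eq_natDegree hf.ne_zero]
  exact_mod_cast hv

end Conjugation

section TorsionPoints

variable {K : Type*} [Field K] {d n : ℕ} {ζ : K} {f : K[X]}

lemma exists_eq_pow_add_pow_of_isTorsionOfOrder (hζ : IsPrimitiveRoot ζ d) (hd : 2 ≤ d)
    (hdn : d < n) (hcop : n.Coprime d) (hf : f.Monic) (hdeg : f.natDegree = n)
    (hsep : f.Separable) {a c : K} (hac : c ^ d = f.eval a) (h : IsTorsionOfOrder d f a c n) :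
    ∃ v : K[X], d * v.natDegree < n ∧ f = (X - C a) ^ n + v ^ d := by
  have : NeZero d := ⟨by omega⟩
  subst hdeg
  exact exists_eq_pow_add_pow hf hcop hd hζ (ne_zero_of_isTorsionOfOrder hsep hdn hac h) hac h.1.2

lemma eq_of_isTorsionOfOrder (hζ : IsPrimitiveRoot ζ d) (hd : 2 ≤ d) (hdn : d < n)
    (hcop : n.Coprime d) (hf : f.Monic) (hdeg : f.natDegree = n) (hsep : f.Separable)
    (hcase : (∃ p, p.Prime ∧ ringChar K = p ∧ ∃ k, n = p ^ k) ∨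
      (¬ ringChar K ∣ n ∧ ¬ d ∣ n - 1))
    {a b c e : K} (hac : c ^ d = f.eval a) (hbe : e ^ d = f.eval b)
    (hP : IsTorsionOfOrder d f a c n) (hQ : IsTorsionOfOrder d f b e n) : a = b := by
  obtain ⟨v, hv, hfv⟩ :=
    exists_eq_pow_add_pow_of_isTorsionOfOrder hζ hd hdn hcop hf hdeg hsep hac hP
  obtain ⟨w, hw, hfw⟩ :=
    exists_eq_pow_add_pow_of_isTorsionOfOrder hζ hd hdn hcop hf hdeg hsep hbe hQ
  rcases hcase with ⟨p, hp, hchar, k, rfl⟩ | ⟨hchar, hdvd⟩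
  · have := Fact.mk hp
    have := ringChar.of_eq hchar
    have hk : k ≠ 0 := by
      rintro rfl
      rw [pow_zero] at hdn
      omega
    exact eq_of_pow_add_pow_eq_of_charP hk hd hζ (hfv ▸ hsep) (hfv.symm.trans hfw)
  · have hnK := (ringChar.spec K n).not.mpr hchar
    exact eq_of_pow_add_pow_eq_of_not_dvd hnK hdvd hv hw (hfv.symm.trans hfw)

lemma setOf_isTorsionOfOrder_eq_range [NeZero d] {a c : K} (hc : c ≠ 0) (hac : c ^ d = f.eval a)
    (h : IsTorsionOfOrder d f a c n)
    (heq : ∀ b e, e ^ d = f.eval b → IsTorsionOfOrder d f b e n → b = a) :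
    {P : K × K | P.2 ^ d = f.eval P.1 ∧ IsTorsionOfOrder d f P.1 P.2 n} =
      Set.range fun z : rootsOfUnity d K => (a, ((z : Kˣ) : K) * c) := by
  ext ⟨b, e⟩
  constructor
  · rintro ⟨hbe, hQ⟩
    obtain rfl := heq b e hbe hQ
    have hpow : (e / c) ^ d = 1 := by
      rw [div_pow, hbe.trans hac.symm, div_self (pow_ne_zero d hc)]
    exact ⟨rootsOfUnity.mkOfPowEq _ hpow, Prod.ext rfl (div_mul_cancel₀ e hc)⟩
  · rintro ⟨z, hz⟩
    obtain ⟨rfl, rfl⟩ := Prod.mk.inj hz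
    refine ⟨?_, isTorsionOfOrder_mul z h⟩
    rw [mul_pow, (mem_rootsOfUnity' d _).mp z.2, one_mul, hac]

end TorsionPoints

end CurveRing

theorem stmt_8_general {K : Type*} [Field K] {d n : ℕ} [HasEnoughRootsOfUnity K d]
    (hd : 2 ≤ d) (hdn : d < n) (hcop : n.Coprime d) {f : K[X]} (hmonic : f.Monic)
    (hdeg : f.natDegree = n) (hsep : f.Separable)
    (hcase : (∃ p, p.Prime ∧ ringChar K = p ∧ ∃ k, n = p ^ k) ∨
      (¬ ringChar K ∣ n ∧ ¬ d ∣ n - 1)) :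
    {P : K × K | P.2 ^ d = f.eval P.1 ∧ IsTorsionOfOrder d f P.1 P.2 n}.ncard = 0 ∨
    {P : K × K | P.2 ^ d = f.eval P.1 ∧ IsTorsionOfOrder d f P.1 P.2 n}.ncard = d := by
  have : NeZero d := ⟨by omega⟩
  obtain ⟨ζ, hζ⟩ := HasEnoughRootsOfUnity.exists_primitiveRoot K d
  rcases Set.eq_empty_or_nonempty
    {P : K × K | P.2 ^ d = f.eval P.1 ∧ IsTorsionOfOrder d f P.1 P.2 n} with
    hempty | ⟨⟨a, c⟩, hac, hP⟩
  · exact .inl (hempty ▸ Set.ncard_empty _)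
  · have hc := CurveRing.ne_zero_of_isTorsionOfOrder hsep hdn hac hP
    have horbit_injective :
        Function.Injective fun z : rootsOfUnity d K => (a, ((z : Kˣ) : K) * c) := fun z w h =>
      Subtype.ext (Units.ext (mul_right_cancel₀ hc (Prod.mk.inj h).2))
    right
    rw [CurveRing.setOf_isTorsionOfOrder_eq_range hc hac hP fun b e hbe hQ =>
      CurveRing.eq_of_isTorsionOfOrder hζ hd hdn hcop hmonic hdeg hsep hcase hbe hac hQ hP,
      Set.ncard_range_of_injective horbit_injective, hζ.card_rootsOfUnity]

theorem stmt_8 {K : Type*} [Field K] [IsAlgClosed K] (d n : ℕ)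
    (hd : 2 ≤ d) (hdn : d < n) (hgcd : Nat.gcd n d = 1)
    (hchar : ¬ (ringChar K ∣ d))
    (f : K[X]) (hmonic : f.Monic) (hdeg : f.natDegree = n) (hsqf : Squarefree f)
    (hDed : IsDedekindDomain (CurveRing K d f))
    (hcase : (∃ p : ℕ, p.Prime ∧ ringChar K = p ∧ ∃ k : ℕ, n = p ^ k) ∨
      (ringChar K = 0 ∧ ¬ d ∣ (n - 1))) :
    {P : K × K | P.2 ^ d = f.eval P.1 ∧ IsTorsionOfOrder d f P.1 P.2 n}.ncard = 0 ∨
    {P : K × K | P.2 ^ d = f.eval P.1 ∧ IsTorsionOfOrder d f P.1 P.2 n}.ncard = d := by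
  have : NeZero (d : K) := ⟨(ringChar.spec K d).not.mpr hchar⟩
  exact stmt_8_general hd hdn hgcd hmonic hdeg (PerfectField.separable_iff_squarefree.mpr hsqf)
    (hcase.imp_right fun ⟨hzero, hdvd⟩ => ⟨by rw [hzero, zero_dvd_iff]; omega, hdvd⟩)
end

section
/- Let K be a field of characteristic 0 and let d ≥ 2 and n > d be integers such that d does not divide n − 1. If x₀, x₁ ∈ K and v₀, v₁ ∈ K[X] are polynomials with d·deg(vᵢ) ≤ n − 1 (i = 0,1) satisfying (X − x₀)^n + v₀(X)^d = (X − x₁)^n + v₁(X)^d in K[X], then x₀ = x₁. -/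
open Polynomial

theorem coeff_pow_eq_zero_of_not_dvd {R : Type*} [Semiring R] {d n : ℕ} (hd : ¬ d ∣ n)
    {v : R[X]} (hv : d * v.natDegree ≤ n) : (v ^ d).coeff n = 0 := by
  have hlt : d * v.natDegree < n := hv.lt_of_ne fun h ↦ hd ⟨_, h.symm⟩
  exact coeff_eq_zero_of_natDegree_lt (natDegree_pow_le.trans_lt hlt)

section Ring

variable {R : Type*} [Ring R]

theorem coeff_X_sub_C_pow_succ (x : R) (n : ℕ) :
    ((X - C x) ^ (n + 1)).coeff n = -((n + 1) • x) := by
  rw [sub_eq_add_neg, ← C_neg, coeff_X_add_C_pow, Nat.add_sub_cancel_left, pow_one,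
    Nat.choose_succ_self_right, ← nsmul_eq_mul', smul_neg]

theorem eq_of_X_sub_C_pow_add_eq {n : ℕ} (hn : IsSMulRegular R (n + 1)) {x y : R} {p q : R[X]}
    (hpq : p.coeff n = q.coeff n)
    (heq : (X - C x) ^ (n + 1) + p = (X - C y) ^ (n + 1) + q) : x = y := by
  have hcoeff : -((n + 1) • x) + p.coeff n = -((n + 1) • y) + q.coeff n := by
    simpa only [coeff_add, coeff_X_sub_C_pow_succ] using congrArg (coeff · n) heq
  rw [hpq, add_left_inj, neg_inj] at hcoeff
  exact hn hcoeff

theorem stmt_10_general (d n : ℕ) (hn : IsSMulRegular R n) (hndvd : ¬ d ∣ n - 1)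
    (x₀ x₁ : R) (v₀ v₁ : R[X])
    (hv₀ : d * v₀.natDegree ≤ n - 1) (hv₁ : d * v₁.natDegree ≤ n - 1)
    (heq : (X - C x₀) ^ n + v₀ ^ d = (X - C x₁) ^ n + v₁ ^ d) :
    x₀ = x₁ := by
  obtain _ | m := n
  · exact absurd (dvd_zero d) hndvd
  · have hpq : (v₀ ^ d).coeff m = (v₁ ^ d).coeff m :=
      (coeff_pow_eq_zero_of_not_dvd hndvd hv₀).trans (coeff_pow_eq_zero_of_not_dvd hndvd hv₁).symm
    exact eq_of_X_sub_C_pow_add_eq hn hpq heq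

end Ring

theorem stmt_10 {K : Type*} [Field K] [CharZero K] (d n : ℕ)
    (hd : 2 ≤ d) (hdn : d < n) (hndvd : ¬ d ∣ (n - 1))
    (x₀ x₁ : K) (v₀ v₁ : K[X])
    (hv₀ : d * v₀.natDegree ≤ n - 1) (hv₁ : d * v₁.natDegree ≤ n - 1)
    (heq : (X - C x₀) ^ n + v₀ ^ d = (X - C x₁) ^ n + v₁ ^ d) :
    x₀ = x₁ := by
  have hn : IsSMulRegular K n := nsmul_right_injective (Nat.ne_zero_of_lt hdn)
  exact stmt_10_general d n hn hndvd x₀ x₁ v₀ v₁ hv₀ hv₁ heq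
end

section
/- Let K be an algebraically closed field of characteristic 0 and let n ≥ 5 be an integer. Then there do not exist elements α, β, γ, δ ∈ K such that the polynomial identity X^n + (αX + β)^{n−1} = (X + 1)^n + (γX + δ)^{n−1} holds in K[X] and the polynomial X^n + (αX + β)^{n−1} has no repeated roots. -/
open Polynomial

/-!
With `d = n - 1`, the identity writes `(X + 1) ^ (d + 1) - X ^ (d + 1)` as a combination of two
`d`-th powers of linear polynomials. Following Sylvester, divide the `k`-th coefficient of a
combination of `r` such powers by `d.choose k`: the quotients `m k` form a Hankel matrix
`m (i + j)` of rank at most `r`. Here `m k = (d + 1) / (d + 1 - k)`, so this Hankel matrix is a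
multiple of a Cauchy matrix and has no vanishing minor. It has a minor of size `r + 1` as soon as
`2 * r ≤ d`, which for `r = 2` is the condition `5 ≤ n`.
-/

/- A vector in the kernel gives, after clearing denominators in `∑ j, v j / (X - y j)`, a polynomial
of degree less than the number of its roots `x i`; its values at the `y j` recover `v`. -/
theorem det_cauchy_ne_zero {ι K : Type*} [Fintype ι] [DecidableEq ι] [Field K] {x y : ι → K}
    (hx : Function.Injective x) (hy : Function.Injective y) (hxy : ∀ i j, x i ≠ y j) :
    (Matrix.of fun i j ↦ (x i - y j)⁻¹).det ≠ 0 := by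
  intro det_eq_zero
  obtain ⟨v, v_ne_zero, hv⟩ := Matrix.exists_mulVec_eq_zero_iff.2 det_eq_zero
  have weight_ne_zero (j : ι) : Lagrange.nodalWeight Finset.univ y j ≠ 0 :=
    Lagrange.nodalWeight_ne_zero hy.injOn (Finset.mem_univ j)
  let p := Lagrange.interpolate Finset.univ y fun j ↦ v j / Lagrange.nodalWeight Finset.univ y j
  have eval_x (i : ι) : p.eval (x i) = 0 := by
    rw [Lagrange.eval_interpolate_not_at_node _ fun j _ ↦ hxy i j]
    have kernel_eq : ∑ j, (x i - y j)⁻¹ * v j = 0 := congrFun hv i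
    refine mul_eq_zero_of_right _ (kernel_eq ▸ Finset.sum_congr rfl fun j _ ↦ ?_)
    field_simp [weight_ne_zero j]
  have p_eq_zero : p = 0 :=
    eq_zero_of_degree_lt_of_eval_index_eq_zero Finset.univ hx.injOn
      (Lagrange.degree_interpolate_lt _ hy.injOn) fun i _ ↦ eval_x i
  refine v_ne_zero (funext fun j ↦ ?_)
  have eval_y : p.eval (y j) = v j / Lagrange.nodalWeight Finset.univ y j :=
    Lagrange.eval_interpolate_at_node _ hy.injOn (Finset.mem_univ j)
  rw [p_eq_zero, eval_zero, eq_comm, div_eq_zero_iff] at eval_y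
  exact eval_y.resolve_right (weight_ne_zero j)

theorem det_inv_sub_add_ne_zero {K : Type*} [Field K] [CharZero K] {d r : ℕ} (hd : 2 * r < d) :
    (Matrix.of fun i j : Fin (r + 1) ↦ (d - (i + j : ℕ) : K)⁻¹).det ≠ 0 := by
  let x (i : Fin (r + 1)) : K := d - (i : ℕ)
  let y (j : Fin (r + 1)) : K := (j : ℕ)
  have hx : Function.Injective x := fun i j hij ↦ by simpa [x, Fin.ext_iff] using hij
  have hy : Function.Injective y := fun i j hij ↦ by simpa [y, Fin.ext_iff] using hij
  have hxy (i j : Fin (r + 1)) : x i ≠ y j := by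
    have ne_add : d ≠ j + i := by omega
    rw [Ne, sub_eq_iff_eq_add, ← Nat.cast_add]
    exact_mod_cast ne_add
  simpa only [x, y, Nat.cast_add, sub_sub] using det_cauchy_ne_zero hx hy hxy

theorem det_mul_eq_zero_of_card_lt {m n R : Type*} [Fintype m] [DecidableEq m] [Fintype n]
    [CommRing R] (hcard : Fintype.card n < Fintype.card m) (A : Matrix m n R) (B : Matrix n m R) :
    (A * B).det = 0 := by
  let t := Fintype.card m - Fintype.card n
  let e : m ≃ n ⊕ Fin t := Fintype.equivOfCardEq (by
    rw [Fintype.card_sum, Fintype.card_fin, Nat.add_sub_cancel' hcard.le])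
  let A' : Matrix m (n ⊕ Fin t) R := Matrix.fromCols A 0
  let B' : Matrix (n ⊕ Fin t) m R := Matrix.fromRows B 0
  have padding : A * B = A'.submatrix id e * B'.submatrix e id := by
    rw [Matrix.submatrix_mul_equiv, Matrix.fromCols_mul_fromRows, Matrix.zero_mul, add_zero,
      Matrix.submatrix_id_id]
  rw [padding, Matrix.det_mul]
  refine mul_eq_zero_of_left
    (Matrix.det_eq_zero_of_column_eq_zero (e.symm (Sum.inr ⟨0, by omega⟩)) fun i ↦ ?_) _
  simp [A']

theorem det_hankel_sum_pow_eq_zero {ι R : Type*} [Fintype ι] [CommRing R] {d r : ℕ}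
    (hcard : Fintype.card ι ≤ r) (hd : 2 * r ≤ d) (c a b : ι → R) :
    (Matrix.of fun i j : Fin (r + 1) ↦
      ∑ s, c s * (a s ^ (i + j : ℕ) * b s ^ (d - (i + j)))).det = 0 := by
  let A : Matrix (Fin (r + 1)) ι R := .of fun i s ↦ c s * (a s ^ (i : ℕ) * b s ^ (d - r - i))
  let B : Matrix ι (Fin (r + 1)) R := .of fun s j ↦ a s ^ (j : ℕ) * b s ^ (r - j)
  convert det_mul_eq_zero_of_card_lt (by simpa using Nat.lt_succ_of_le hcard) A B using 2
  ext i j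
  refine Finset.sum_congr rfl fun s _ ↦ ?_
  have exponent_eq : d - (i + j : ℕ) = (d - r - i) + (r - j) := by omega
  simp only [A, B, Matrix.of_apply, exponent_eq, pow_add]
  ring

theorem coeff_C_mul_X_add_C_pow {R : Type*} [CommSemiring R] (a b : R) (d k : ℕ) :
    ((C a * X + C b) ^ d).coeff k = a ^ k * b ^ (d - k) * d.choose k := by
  have comp_eq : (C a * X + C b) ^ d = ((X + C b) ^ d).comp (C a * X) := by simp
  rw [comp_eq, comp_C_mul_X_coeff, coeff_X_add_C_pow]
  ring

theorem exists_isPrime_charZero_quotient (R : Type*) [CommRing R] [CharZero R] :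
    ∃ P : Ideal R, P.IsPrime ∧ CharZero (R ⧸ P) := by
  let S : Submonoid R := (nonZeroDivisors ℕ).map (Nat.castRingHom R)
  have bot_disjoint : Disjoint ((⊥ : Ideal R) : Set R) S := by
    rw [Set.disjoint_left]
    rintro _ cast_eq_zero ⟨m, hm, rfl⟩
    exact nonZeroDivisors.ne_zero hm (Nat.cast_eq_zero.1 cast_eq_zero)
  obtain ⟨P, hP, -, P_disjoint⟩ := Ideal.exists_le_prime_disjoint ⊥ S bot_disjoint
  refine ⟨P, hP, charZero_of_inj_zero fun m hm ↦ ?_⟩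
  by_contra m_ne_zero
  have mem_S : (m : R) ∈ S :=
    Submonoid.mem_map_of_mem (Nat.castRingHom R) (mem_nonZeroDivisors_of_ne_zero m_ne_zero)
  have mem_P : (m : R) ∈ P := Ideal.Quotient.eq_zero_iff_mem.1 (by simpa using hm)
  exact Set.disjoint_left.1 P_disjoint mem_P mem_S

section BinomialDifference

variable {ι R : Type*} [Fintype ι] [CommRing R] [CharZero R] {d : ℕ} {c a b : ι → R}

theorem sub_mul_sum_eq_of_X_add_one_pow_sub_X_pow_eq_sum_pow [IsDomain R]
    (h : (X + 1 : R[X]) ^ (d + 1) - X ^ (d + 1) = ∑ s, C (c s) * (C (a s) * X + C (b s)) ^ d)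
    {k : ℕ} (hk : k ≤ d) :
    (d + 1 - k : R) * ∑ s, c s * (a s ^ k * b s ^ (d - k)) = d + 1 := by
  have choose_ne_zero : (d.choose k : R) ≠ 0 := mod_cast (Nat.choose_pos hk).ne'
  have coeff_eq : ((d + 1).choose k : R) =
      (∑ s, c s * (a s ^ k * b s ^ (d - k))) * d.choose k := by
    have := congrArg (coeff · k) h
    simpa only [coeff_sub, coeff_X_add_one_pow, coeff_X_pow, if_neg (Nat.lt_succ_of_le hk).ne,
      sub_zero, finsetSum_coeff, coeff_C_mul, coeff_C_mul_X_add_C_pow, Finset.sum_mul,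
      mul_assoc] using this
  have choose_eq : (d.choose k : R) * (d + 1) = (d + 1).choose k * (d + 1 - k) := by
    have := congrArg (Nat.cast : ℕ → R) (d.choose_mul_succ_eq k)
    rwa [Nat.cast_mul, Nat.cast_mul, Nat.cast_sub (by omega), Nat.cast_succ] at this
  apply mul_right_cancel₀ choose_ne_zero
  linear_combination -choose_eq - (d + 1 - k : R) * coeff_eq

theorem lt_two_mul_card_of_X_add_one_pow_sub_X_pow_eq_sum_pow
    (h : (X + 1 : R[X]) ^ (d + 1) - X ^ (d + 1) = ∑ s, C (c s) * (C (a s) * X + C (b s)) ^ d) :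
    d < 2 * Fintype.card ι := by
  by_contra! hd
  obtain ⟨P, _, _⟩ := exists_isPrime_charZero_quotient R
  let K := FractionRing (R ⧸ P)
  let f : R →+* K := algebraMap R K
  have h_map : (X + 1 : K[X]) ^ (d + 1) - X ^ (d + 1) =
      ∑ s, C (f (c s)) * (C (f (a s)) * X + C (f (b s))) ^ d := by
    simpa [Polynomial.map_sum] using congrArg (map f) h
  have hankel_eq : (Matrix.of fun i j : Fin (Fintype.card ι + 1) ↦
      ∑ s, f (c s) * (f (a s) ^ (i + j : ℕ) * f (b s) ^ (d - (i + j)))) =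
      (d + 1 : K) • Matrix.of fun i j : Fin (Fintype.card ι + 1) ↦
        ((d + 1 : ℕ) - (i + j : ℕ) : K)⁻¹ := by
    ext i j
    have hij : (i + j : ℕ) < d + 1 := by omega
    have denominator_ne_zero : ((d + 1 : ℕ) - (i + j : ℕ) : K) ≠ 0 :=
      sub_ne_zero.2 (mod_cast hij.ne')
    rw [Matrix.smul_apply, Matrix.of_apply, Matrix.of_apply, smul_eq_mul,
      eq_mul_inv_iff_mul_eq₀ denominator_ne_zero, mul_comm, Nat.cast_succ]
    exact sub_mul_sum_eq_of_X_add_one_pow_sub_X_pow_eq_sum_pow h_map (Nat.lt_succ_iff.1 hij)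
  have det_eq_zero := det_hankel_sum_pow_eq_zero le_rfl hd (f ∘ c) (f ∘ a) (f ∘ b)
  simp only [Function.comp_apply, hankel_eq, Matrix.det_smul] at det_eq_zero
  exact mul_ne_zero (pow_ne_zero _ d.cast_add_one_ne_zero)
    (det_inv_sub_add_ne_zero (Nat.lt_succ_of_le hd)) det_eq_zero

end BinomialDifference

theorem stmt_12_general {R : Type*} [CommRing R] [CharZero R] {n : ℕ} (hn : 5 ≤ n)
    (α β γ δ : R) :
    (X : R[X]) ^ n + (C α * X + C β) ^ (n - 1) ≠ (X + 1) ^ n + (C γ * X + C δ) ^ (n - 1) := by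
  intro h
  obtain ⟨d, rfl⟩ := Nat.exists_eq_add_of_le' (show 1 ≤ n by omega)
  rw [Nat.add_sub_cancel] at h
  have two_powers : (X + 1 : R[X]) ^ (d + 1) - X ^ (d + 1) =
      ∑ s, C (![1, -1] s) * (C (![α, γ] s) * X + C (![β, δ] s)) ^ d := by
    simp only [Fin.sum_univ_two, Matrix.cons_val_zero, Matrix.cons_val_one, C_neg, C_1]
    linear_combination -h
  have d_lt : d < 2 * Fintype.card (Fin 2) :=
    lt_two_mul_card_of_X_add_one_pow_sub_X_pow_eq_sum_pow two_powers
  rw [Fintype.card_fin] at d_lt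
  omega

theorem stmt_12 {K : Type*} [Field K] [IsAlgClosed K] [CharZero K]
    (n : ℕ) (hn : 5 ≤ n) :
    ¬ ∃ α β γ δ : K,
      (X : K[X]) ^ n + (C α * X + C β) ^ (n - 1) =
        (X + 1) ^ n + (C γ * X + C δ) ^ (n - 1) ∧
      Squarefree ((X : K[X]) ^ n + (C α * X + C β) ^ (n - 1)) := by
  rintro ⟨α, β, γ, δ, h, -⟩
  exact stmt_12_general hn α β γ δ h
end

section
/- Let K be an algebraically closed field of characteristic 0, let n > 4 be an integer with n ≠ 6, and let ε ∈ K be a primitive n-th root of unity. Let m be a positive integer with gcd(m,n) = 1, let ζ ∈ K be a primitive m-th root of unity, and let α₀, α₁, α₂, α₃ be elements of the subfield of K generated by ℚ and ζ (the image of ℚ(ζ_m) in K). Then there do not exist a, b, c, e ∈ K with ae − bc ≠ 0 such that for each i ∈ {0,1,2,3} one has c·ε^i + e ≠ 0 and a·ε^i + b = α_i·(c·ε^i + e); in other words, no linear fractional transformation T over K satisfies T(ε^i) = α_i for i = 0, 1, 2, 3. -/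
open Polynomial

/-!
A linear fractional transformation `T` preserves cross ratios, and `1, ε, ε², ε³` have cross ratio
`ε / (1 + ε)²`. If `T` maps these four points into a subfield `F`, then `l = ε / (1 + ε)²` lies in
`F`, so `ε` is a root of the quadratic `l (1 + X)² - X`. For `F = ℚ(ζ)` with `ζ` of order prime
to `n`, however, `ε` has degree `φ(n)` over `F`, and `φ(n) > 2` when `n > 4` and `n ≠ 6`.
-/

section Totient

variable {n k : ℕ}

lemma exists_coprime_of_four_lt_of_ne_six (hn : 4 < n) (hn6 : n ≠ 6) :
    ∃ k, 1 < k ∧ k < n - 1 ∧ n.Coprime k := by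
  rcases n.even_or_odd with ⟨k, rfl⟩ | hodd
  · rw [← two_mul]
    rcases k.even_or_odd with hk | hk
    · exact ⟨k + 1, by omega, by omega,
        (Nat.coprime_two_left.2 hk.add_one).mul_left (by simp)⟩
    · have hk3 : k ≠ 3 := by omega
      exact ⟨k + 2, by omega, by omega,
        (Nat.coprime_two_left.2 (hk.add_even even_two)).mul_left (by simpa using hk)⟩
  · exact ⟨2, by omega, by omega, Nat.coprime_two_right.2 hodd⟩

lemma two_lt_totient_of_coprime (hk : 1 < k) (hkn : k < n - 1) (hnk : n.Coprime k) :
    2 < n.totient := by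
  have hpred : n.Coprime (n - 1) :=
    (Nat.coprime_self_sub_right (by omega)).2 n.coprime_one_right
  have hsub : {1, k, n - 1} ⊆ (Finset.range n).filter n.Coprime := by grind
  calc 2 < ({1, k, n - 1} : Finset ℕ).card := by
        rw [Finset.card_eq_three.2 ⟨1, k, n - 1, by omega, by omega, by omega, rfl⟩]
        norm_num
    _ ≤ n.totient := Finset.card_le_card hsub

lemma two_lt_totient_of_four_lt_of_ne_six (hn : 4 < n) (hn6 : n ≠ 6) : 2 < n.totient :=
  have ⟨_, hk, hkn, hnk⟩ := exists_coprime_of_four_lt_of_ne_six hn hn6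
  two_lt_totient_of_coprime hk hkn hnk

end Totient

section CrossRatio

variable {K : Type*} [Field K]

/-- The cross ratio `(z₀ - z₁)(z₂ - z₃) / ((z₀ - z₂)(z₁ - z₃))` of four points of a field, an
invariant of linear fractional transformations. Of the six usual normalizations, this is the one
that takes the value `x / (1 + x)²` at `1, x, x², x³`. It is `0` when `z₀ = z₂` or `z₁ = z₃`. -/
def crossRatio (z : Fin 4 → K) : K :=
  (z 0 - z 1) * (z 2 - z 3) / ((z 0 - z 2) * (z 1 - z 3))

lemma map_crossRatio {F : Type*} [Field F] (f : F →+* K) (z : Fin 4 → F) :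
    f (crossRatio z) = crossRatio (f ∘ z) := by
  simp only [crossRatio, map_div₀, map_mul, map_sub, Function.comp_apply]

lemma crossRatio_linearFractional {a b c e : K} (hdet : a * e - b * c ≠ 0) {z : Fin 4 → K}
    (hz : ∀ i, c * z i + e ≠ 0) :
    crossRatio (fun i ↦ (a * z i + b) / (c * z i + e)) = crossRatio z := by
  have hsub (i j : Fin 4) : (a * z i + b) / (c * z i + e) - (a * z j + b) / (c * z j + e) =
      (a * e - b * c) * (z i - z j) * ((c * z i + e)⁻¹ * (c * z j + e)⁻¹) := by
    rw [div_sub_div _ _ (hz i) (hz j), ← mul_inv, ← div_eq_mul_inv]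
    ring
  have hscale : (a * e - b * c) ^ 2 * ∏ i, (c * z i + e)⁻¹ ≠ 0 :=
    mul_ne_zero (pow_ne_zero 2 hdet) (Finset.prod_ne_zero_iff.2 fun i _ ↦ inv_ne_zero (hz i))
  unfold crossRatio
  rw [← mul_div_mul_left _ ((z 0 - z 2) * (z 1 - z 3)) hscale]
  simp only [hsub, Fin.prod_univ_four]
  congr 1 <;> ring

lemma crossRatio_pow {x : K} (hx : x ≠ 1) :
    crossRatio (fun i ↦ x ^ (i : ℕ)) = x / (1 + x) ^ 2 := by
  rcases eq_or_ne x 0 with rfl | hx0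
  · simp [crossRatio]
  have hscale : x * (1 - x) ^ 2 ≠ 0 := mul_ne_zero hx0 (pow_ne_zero 2 (sub_ne_zero.2 hx.symm))
  rw [← mul_div_mul_left _ _ hscale]
  simp only [crossRatio, Fin.coe_ofNat_eq_mod, Nat.reduceMod]
  congr 1 <;> ring

end CrossRatio

section Degree

variable {F K : Type*} [Field F] [Field K] [Algebra F K]

lemma natDegree_minpoly_le_two_of_mul_one_add_sq {x : K} {l : F}
    (h : algebraMap F K l * (1 + x) ^ 2 = x) : (minpoly F x).natDegree ≤ 2 := by
  set p : F[X] := C l * (1 + X) ^ 2 - X with hp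
  have hp0 : p ≠ 0 := fun h0 ↦ by
    have hl : l = 0 := by simpa [hp] using congrArg (eval 0) h0
    simp [hp, hl] at h0
  have hroot : aeval x p = 0 := by simp [hp, h]
  calc (minpoly F x).natDegree ≤ p.natDegree :=
        natDegree_le_natDegree (minpoly.degree_le_of_ne_zero F x hp0 hroot)
    _ ≤ 2 := by rw [hp]; compute_degree

lemma natDegree_minpoly_le_two_of_linearFractional_pow {x : K} (hx : x ^ 2 ≠ 1)
    {a b c e : K} (hdet : a * e - b * c ≠ 0) {α : Fin 4 → F}
    (h : ∀ i : Fin 4, c * x ^ (i : ℕ) + e ≠ 0 ∧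
      a * x ^ (i : ℕ) + b = algebraMap F K (α i) * (c * x ^ (i : ℕ) + e)) :
    (minpoly F x).natDegree ≤ 2 := by
  obtain ⟨hx1, hx1'⟩ : x ≠ 1 ∧ x ≠ -1 := sq_ne_one_iff.1 hx
  have hα : algebraMap F K ∘ α =
      fun i : Fin 4 ↦ (a * x ^ (i : ℕ) + b) / (c * x ^ (i : ℕ) + e) :=
    funext fun i ↦ eq_div_of_mul_eq (h i).1 (h i).2.symm
  have hcr : algebraMap F K (crossRatio α) = x / (1 + x) ^ 2 := by
    rw [map_crossRatio, hα, crossRatio_linearFractional hdet fun i ↦ (h i).1, crossRatio_pow hx1]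
  have hx0 : (1 + x) ^ 2 ≠ 0 := pow_ne_zero 2 fun h0 ↦ hx1' (eq_neg_of_add_eq_zero_right h0)
  exact natDegree_minpoly_le_two_of_mul_one_add_sq ((eq_div_iff hx0).1 hcr)

lemma minpoly_dvd_cyclotomic_of_isPrimitiveRoot {n : ℕ} (hn : 0 < n) {ε : K}
    (hε : IsPrimitiveRoot ε n) : minpoly F ε ∣ cyclotomic n F := by
  refine minpoly.dvd F ε ?_
  rw [aeval_def, eval₂_eq_eval_map, map_cyclotomic]
  exact hε.isRoot_cyclotomic hn

open IntermediateField

lemma finrank_adjoin_le_totient {n : ℕ} (hn : 0 < n) {ε : K} (hε : IsPrimitiveRoot ε n) :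
    Module.finrank F F⟮ε⟯ ≤ n.totient := by
  rw [adjoin.finrank (hε.isIntegral hn).tower_top, ← natDegree_cyclotomic n F]
  exact natDegree_le_of_dvd (minpoly_dvd_cyclotomic_of_isPrimitiveRoot hn hε)
    (cyclotomic_ne_zero n F)

lemma totient_lcm_le_finrank_mul_natDegree_minpoly {E : Type*} [Field E] [Algebra F E]
    [Algebra E K] [IsScalarTower F E K] [FiniteDimensional F E] {m n : ℕ}
    (hirr : Irreducible (cyclotomic (m.lcm n) F)) {ζ : E} {ε : K} (hζ : IsPrimitiveRoot ζ m)
    (hε : IsPrimitiveRoot ε n) :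
    (m.lcm n).totient ≤ Module.finrank F E * (minpoly E ε).natDegree := by
  have hn : 0 < n := Nat.pos_of_ne_zero fun h0 ↦ by simp [h0] at hirr
  have hεi : IsIntegral E ε := (hε.isIntegral hn).tower_top
  have := adjoin.finiteDimensional hεi
  have : FiniteDimensional F E⟮ε⟯ := .trans F E _
  have hζ' : IsPrimitiveRoot (algebraMap E E⟮ε⟯ ζ) m :=
    hζ.map_of_injective (algebraMap E E⟮ε⟯).injective
  have hε' : IsPrimitiveRoot (AdjoinSimple.gen E ε) n :=
    .of_map_of_injective (f := algebraMap E⟮ε⟯ K) hε (algebraMap E⟮ε⟯ K).injective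
  calc (m.lcm n).totient ≤ Module.finrank F E⟮ε⟯ := hζ'.lcm_totient_le_finrank hε' hirr
    _ = Module.finrank F E * (minpoly E ε).natDegree := by
      rw [← Module.finrank_mul_finrank F E, adjoin.finrank hεi]

lemma totient_le_natDegree_minpoly_adjoin {m n : ℕ} (hmn : m.Coprime n)
    (hirr : Irreducible (cyclotomic (m * n) F)) {ζ ε : K} (hζ : IsPrimitiveRoot ζ m)
    (hε : IsPrimitiveRoot ε n) : n.totient ≤ (minpoly F⟮ζ⟯ ε).natDegree := by
  have hm : 0 < m := Nat.pos_of_ne_zero fun h0 ↦ by simp [h0] at hirr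
  have := adjoin.finiteDimensional (K := F) (hζ.isIntegral hm).tower_top
  have hζ' : IsPrimitiveRoot (AdjoinSimple.gen F ζ) m :=
    .of_map_of_injective (f := algebraMap F⟮ζ⟯ K) hζ (algebraMap F⟮ζ⟯ K).injective
  refine Nat.le_of_mul_le_mul_left ?_ (Nat.totient_pos.2 hm)
  calc m.totient * n.totient = (m.lcm n).totient := by rw [hmn.lcm_eq_mul, Nat.totient_mul hmn]
    _ ≤ Module.finrank F F⟮ζ⟯ * (minpoly F⟮ζ⟯ ε).natDegree :=
      totient_lcm_le_finrank_mul_natDegree_minpoly (by rwa [hmn.lcm_eq_mul]) hζ' hε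
    _ ≤ m.totient * (minpoly F⟮ζ⟯ ε).natDegree :=
      Nat.mul_le_mul_right _ (finrank_adjoin_le_totient hm hζ)

theorem stmt_13_general {m n : ℕ} (hn : 4 < n) (hn6 : n ≠ 6) (hmn : m.Coprime n)
    (hirr : Irreducible (cyclotomic (m * n) F)) {ζ ε : K} (hζ : IsPrimitiveRoot ζ m)
    (hε : IsPrimitiveRoot ε n) {α : Fin 4 → K} (hα : ∀ i, α i ∈ F⟮ζ⟯) :
    ¬ ∃ a b c e : K, a * e - b * c ≠ 0 ∧
      ∀ i : Fin 4,
        c * ε ^ (i : ℕ) + e ≠ 0 ∧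
        a * ε ^ (i : ℕ) + b = α i * (c * ε ^ (i : ℕ) + e) := by
  rintro ⟨a, b, c, e, hdet, h⟩
  have hε2 : ε ^ 2 ≠ 1 := hε.pow_ne_one_of_pos_of_lt two_ne_zero (by omega)
  have hdeg : (minpoly F⟮ζ⟯ ε).natDegree ≤ 2 :=
    natDegree_minpoly_le_two_of_linearFractional_pow hε2 hdet (α := fun i ↦ ⟨α i, hα i⟩) h
  have htot : n.totient ≤ (minpoly F⟮ζ⟯ ε).natDegree :=
    totient_le_natDegree_minpoly_adjoin hmn hirr hζ hε
  exact (htot.trans hdeg).not_gt (two_lt_totient_of_four_lt_of_ne_six hn hn6)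

end Degree

theorem stmt_13 {K : Type*} [Field K] [IsAlgClosed K] [CharZero K]
    (n : ℕ) (hn : 4 < n) (hn6 : n ≠ 6)
    (ε : K) (hε : IsPrimitiveRoot ε n)
    (m : ℕ) (hm : 0 < m) (hmn : Nat.gcd m n = 1)
    (ζ : K) (hζ : IsPrimitiveRoot ζ m)
    (α : Fin 4 → K) (hα : ∀ i, α i ∈ Subfield.closure {ζ}) :
    ¬ ∃ a b c e : K, a * e - b * c ≠ 0 ∧
      ∀ i : Fin 4,
        c * ε ^ (i : ℕ) + e ≠ 0 ∧
        a * ε ^ (i : ℕ) + b = α i * (c * ε ^ (i : ℕ) + e) :=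
  stmt_13_general hn hn6 hmn (cyclotomic.irreducible_rat (Nat.mul_pos hm (by omega))) hζ hε
    fun i ↦ Subfield.closure_mono Set.subset_union_right (hα i)
end

section
/- Let n ≥ 3 be an integer and K an algebraically closed field whose characteristic divides neither n − 1 nor n. Let α, β, γ, δ ∈ K be such that X^n + (αX + β)^{n−1} = (X + 1)^n + (γX + δ)^{n−1} in K[X], and assume this polynomial has no repeated roots. Then αδ − βγ ≠ 0, so that T(z) = (αz + β)/(γz + δ) is an honest linear fractional transformation of the projective line over K; moreover, for every root η ∈ K of the polynomial (X + 1)^n − X^n one has γη + δ ≠ 0, and T maps the (n−1)-element set of roots of (X + 1)^n − X^n bijectively onto the (n−1)-element set μ_{n−1} of (n−1)-th roots of unity in K. -/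
open Polynomial

/-!
Write `L = αX + β` and `M = γX + δ`, so that `(X + 1) ^ n - X ^ n = L ^ (n - 1) - M ^ (n - 1)`.
The left side is separable: up to the unit `n` its derivative is `(X + 1) ^ (n - 1) - X ^ (n - 1)`,
and together the two generate an ideal containing the coprime polynomials `X ^ (n - 1)` and
`(X + 1) ^ (n - 1)`. On the right side, the square of a common factor of `L` and `M` divides the
difference since `n - 1 ≥ 2`. Hence `L` and `M` are coprime, which forces `αδ - βγ ≠ 0`. The roots
of the left side are then the `η` with `T(η) ^ (n - 1) = 1`, and the value `α / γ` missed by `T` is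
not an `(n - 1)`-th root of unity, since comparing coefficients of `X ^ (n - 1)` gives
`α ^ (n - 1) - γ ^ (n - 1) = n ≠ 0`.
-/

theorem coeff_linear_pow {R : Type*} [Semiring R] (a b : R) (m : ℕ) :
    ((C a * X + C b) ^ m).coeff m = a ^ m := by
  simpa using coeff_pow_of_natDegree_le (m := m) (natDegree_linear_le (a := a) (b := b))

section CommRing

variable {R : Type*} [CommRing R]

theorem isCoprime_pow_succ_sub_pow_succ {x y : R} (h : IsUnit (x - y)) (n : ℕ) :
    IsCoprime (x ^ (n + 1) - y ^ (n + 1)) (x ^ n - y ^ n) := by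
  obtain ⟨w, hw⟩ := h.exists_left_inv
  have hxy : IsCoprime x y := ⟨w, -w, by linear_combination hw⟩
  obtain ⟨u, v, huv⟩ := hxy.pow (m := n) (n := n)
  refine ⟨w * (u + v), -w * (u * y + v * x), ?_⟩
  linear_combination (u * x ^ n + v * y ^ n) * hw + huv

theorem isRelPrime_of_squarefree_pow_sub_pow {x y : R} {m : ℕ} (hm : 2 ≤ m)
    (h : Squarefree (x ^ m - y ^ m)) : IsRelPrime x y := by
  intro d hdx hdy
  have sq_dvd_pow {z : R} (hz : d ∣ z) : d ^ 2 ∣ z ^ m :=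
    (pow_dvd_pow_of_dvd hz 2).trans (pow_dvd_pow z hm)
  exact h d (sq d ▸ dvd_sub (sq_dvd_pow hdx) (sq_dvd_pow hdy))

theorem separable_pow_sub_pow {f g : R[X]} {n : ℕ} (hn : IsUnit (n : R))
    (hder : derivative f = derivative g) (hunit : IsUnit (derivative g))
    (hfg : IsUnit (f - g)) : (f ^ n - g ^ n).Separable := by
  rcases n with _ | n
  · have := subsingleton_of_zero_eq_one (isUnit_zero_iff.mp (Nat.cast_zero (R := R) ▸ hn))
    exact separable_of_subsingleton _
  have derivative_eq : derivative (f ^ (n + 1) - g ^ (n + 1)) =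
      C ((n + 1 : ℕ) : R) * derivative g * (f ^ n - g ^ n) := by
    simp only [derivative_sub, derivative_pow, hder, Nat.add_sub_cancel]
    ring
  rw [separable_def, derivative_eq, isCoprime_mul_unit_left_right ((hn.map C).mul hunit)]
  exact isCoprime_pow_succ_sub_pow_succ hfg n

theorem coeff_X_add_one_pow_sub_X_pow_pred (n : ℕ) :
    ((X + 1 : R[X]) ^ n - X ^ n).coeff (n - 1) = (n : R) := by
  rcases n with _ | m
  · simp
  · simp [coeff_X_add_one_pow, coeff_X_pow]

theorem eq_zero_of_isCoprime_linear_of_det_eq_zero [IsDomain R] {a b c d : R}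
    (h : IsCoprime (C a * X + C b) (C c * X + C d)) (hdet : a * d - b * c = 0) : a = 0 := by
  by_contra ha
  have proportional : C a * (C c * X + C d) = C c * (C a * X + C b) := by
    have hC : C a * C d - C b * C c = 0 := by simp only [← C_mul, ← C_sub, hdet, C_0]
    linear_combination hC
  have hdvd : C a * X + C b ∣ C a := h.dvd_of_dvd_mul_right ⟨C c, by rw [proportional, mul_comm]⟩
  have hdeg := natDegree_le_of_dvd hdvd (C_ne_zero.mpr ha)
  rw [natDegree_linear ha, natDegree_C] at hdeg
  exact Nat.not_succ_le_zero 0 hdeg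

end CommRing

section Field

variable {K : Type*} [Field K] {a b c d : K}

theorem bijOn_linear_div_linear (hdet : a * d - b * c ≠ 0) :
    Set.BijOn (fun x : K => (a * x + b) / (c * x + d)) {x | c * x + d ≠ 0} {z | a - c * z ≠ 0} := by
  refine ⟨?_, ?_, ?_⟩
  · intro x (hx : c * x + d ≠ 0)
    have image_sub : (a - c * ((a * x + b) / (c * x + d))) * (c * x + d) = a * d - b * c := by
      linear_combination -c * div_mul_cancel₀ (a * x + b) hx
    exact left_ne_zero_of_mul (image_sub ▸ hdet)
  · intro x hx y hy (hxy : (a * x + b) / (c * x + d) = (a * y + b) / (c * y + d))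
    rw [div_eq_div_iff hx hy] at hxy
    exact mul_left_cancel₀ hdet (by linear_combination hxy)
  · intro z (hz : a - c * z ≠ 0)
    obtain ⟨x, hx⟩ : ∃ x, x * (a - c * z) = d * z - b := ⟨_, div_mul_cancel₀ _ hz⟩
    have hnum : a * x + b = z * (c * x + d) := by linear_combination hx
    have hden : (c * x + d) * (a - c * z) = a * d - b * c := by linear_combination c * hx
    have hden_ne : c * x + d ≠ 0 := left_ne_zero_of_mul (hden ▸ hdet)
    exact ⟨x, hden_ne, (div_eq_iff hden_ne).mpr hnum⟩

theorem linear_ne_zero_of_linear_pow_eq {m : ℕ} (hm : m ≠ 0) (hdet : a * d - b * c ≠ 0) {x : K}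
    (h : (a * x + b) ^ m = (c * x + d) ^ m) : c * x + d ≠ 0 := by
  intro hden
  have hnum : a * x + b = 0 := pow_eq_zero_iff hm |>.mp (by rw [h, hden, zero_pow hm])
  exact hdet (by linear_combination a * hden - c * hnum)

theorem bijOn_linear_div_linear_pow_eq_one {m : ℕ} (hdet : a * d - b * c ≠ 0)
    (hac : a ^ m ≠ c ^ m) :
    Set.BijOn (fun x : K => (a * x + b) / (c * x + d))
      {x | (a * x + b) ^ m = (c * x + d) ^ m} {z | z ^ m = 1} := by
  have hm : m ≠ 0 := by
    rintro rfl
    exact hac (by rw [pow_zero, pow_zero])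
  have rootsOfUnity_subset : {z : K | z ^ m = 1} ⊆ {z | a - c * z ≠ 0} := by
    intro z (hz : z ^ m = 1) h
    exact hac (by rw [sub_eq_zero.mp h, mul_pow, hz, mul_one])
  convert (bijOn_linear_div_linear hdet).subset_right rootsOfUnity_subset using 1
  ext x
  have div_pow_eq_one (hden : c * x + d ≠ 0) :
      ((a * x + b) / (c * x + d)) ^ m = 1 ↔ (a * x + b) ^ m = (c * x + d) ^ m := by
    rw [div_pow, div_eq_one_iff_eq (pow_ne_zero m hden)]
  constructor
  · intro hx
    have hden := linear_ne_zero_of_linear_pow_eq hm hdet hx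
    exact ⟨hden, (div_pow_eq_one hden).mpr hx⟩
  · rintro ⟨hden, hx⟩
    exact (div_pow_eq_one hden).mp hx

theorem det_ne_zero_of_squarefree_linear_pow_sub_linear_pow {m : ℕ} (hm : 2 ≤ m)
    (hac : ¬(a = 0 ∧ c = 0))
    (hsqf : Squarefree ((C a * X + C b) ^ m - (C c * X + C d) ^ m)) : a * d - b * c ≠ 0 := by
  intro hdet
  have hcop := (isRelPrime_of_squarefree_pow_sub_pow hm hsqf).isCoprime
  have ha : a = 0 := eq_zero_of_isCoprime_linear_of_det_eq_zero hcop hdet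
  have hc : c = 0 :=
    eq_zero_of_isCoprime_linear_of_det_eq_zero hcop.symm (by linear_combination -hdet)
  exact hac ⟨ha, hc⟩

end Field

theorem stmt_15_general {K : Type*} [Field K] {n : ℕ} (hn : 3 ≤ n) (hnK : (n : K) ≠ 0)
    {α β γ δ : K}
    (heq : (X : K[X]) ^ n + (C α * X + C β) ^ (n - 1) =
      (X + 1) ^ n + (C γ * X + C δ) ^ (n - 1)) :
    α * δ - β * γ ≠ 0 ∧
    (∀ η : K, (((X : K[X]) + 1) ^ n - X ^ n).eval η = 0 → γ * η + δ ≠ 0) ∧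
    Set.BijOn (fun η : K => (α * η + β) / (γ * η + δ))
      {η : K | (((X : K[X]) + 1) ^ n - X ^ n).eval η = 0}
      {z : K | z ^ (n - 1) = 1} := by
  have hdiff : (X + 1 : K[X]) ^ n - X ^ n =
      (C α * X + C β) ^ (n - 1) - (C γ * X + C δ) ^ (n - 1) := by linear_combination -heq
  have hlead : (n : K) = α ^ (n - 1) - γ ^ (n - 1) := by
    rw [← coeff_X_add_one_pow_sub_X_pow_pred, hdiff, coeff_sub,
      coeff_linear_pow, coeff_linear_pow]
  have hαγ : α ^ (n - 1) ≠ γ ^ (n - 1) := sub_ne_zero.mp (hlead ▸ hnK)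
  have hsep : ((X + 1 : K[X]) ^ n - X ^ n).Separable :=
    separable_pow_sub_pow hnK.isUnit (by simp) (by simp) (by simp)
  have hdet : α * δ - β * γ ≠ 0 :=
    det_ne_zero_of_squarefree_linear_pow_sub_linear_pow (by omega : 2 ≤ n - 1)
      (fun h => hαγ (by rw [h.1, h.2])) (hdiff ▸ hsep.squarefree)
  have hroot (η : K) : ((X + 1 : K[X]) ^ n - X ^ n).eval η = 0 ↔
      (α * η + β) ^ (n - 1) = (γ * η + δ) ^ (n - 1) := by
    simp [hdiff, sub_eq_zero]
  simp only [hroot]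
  exact ⟨hdet, fun η => linear_ne_zero_of_linear_pow_eq (by omega) hdet,
    bijOn_linear_div_linear_pow_eq_one hdet hαγ⟩

theorem stmt_15 {K : Type*} [Field K] [IsAlgClosed K]
    (n : ℕ) (hn : 3 ≤ n)
    (hchar1 : ¬ (ringChar K ∣ (n - 1))) (hchar2 : ¬ (ringChar K ∣ n))
    (α β γ δ : K)
    (heq : (X : K[X]) ^ n + (C α * X + C β) ^ (n - 1) =
      (X + 1) ^ n + (C γ * X + C δ) ^ (n - 1))
    (hsqf : Squarefree ((X : K[X]) ^ n + (C α * X + C β) ^ (n - 1))) :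
    α * δ - β * γ ≠ 0 ∧
    (∀ η : K, (((X : K[X]) + 1) ^ n - X ^ n).eval η = 0 → γ * η + δ ≠ 0) ∧
    Set.BijOn (fun η : K => (α * η + β) / (γ * η + δ))
      {η : K | (((X : K[X]) + 1) ^ n - X ^ n).eval η = 0}
      {z : K | z ^ (n - 1) = 1} :=
  stmt_15_general hn (fun h => hchar2 (ringChar.dvd h)) heq
end

section
/- Let K be an algebraically closed field of characteristic different from 2 and 3, and let α, β ∈ K. Then the quartic polynomial X⁴ + (αX + β)³ ∈ K[X] has a repeated root if and only if β = 0 or 256·β = 27·α⁴. (Equivalently, its discriminant equals β⁸·(256β − 27α⁴).) -/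
/-!
More generally, consider `f = X ^ (n + 1) + (α X + β) ^ n` with `n ≥ 2`. A repeated root of `f` is a
common root of `f` and `f'`, and the combination
`(n + 1) f - X f' = (α X + β) ^ (n - 1) (α X + (n + 1) β)` leaves only two candidates for it. If
`α x + β = 0`, then `f(x) = 0` forces `x = 0` and hence `β = 0`. If `α x = -(n + 1) β`, then
`α ^ (n + 1) f(x) = (-β) ^ n (n ^ n α ^ (n + 1) - (n + 1) ^ (n + 1) β)`, and the second factor
is the remaining condition on `α` and `β`. Conversely, `x = -(n + 1) β / α` is a repeated root when
this condition holds and `α, β ≠ 0`. When `α = 0 ≠ β`, the condition makes `n + 1` vanish in the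
field, so that `f' = 0` and every root of `f = X ^ (n + 1) + β ^ n` is repeated.
-/

open Polynomial

/-- The polynomial `X ^ (n + 1) + (α X + β) ^ n`, whose case `n = 3` is the quartic of `stmt_19`. -/
noncomputable def powSuccAddLinearPow {R : Type*} [CommRing R] (n : ℕ) (α β : R) : R[X] :=
  X ^ (n + 1) + (C α * X + C β) ^ n

namespace powSuccAddLinearPow

section CommRing

variable {R : Type*} [CommRing R] {n : ℕ} {α β x : R}

lemma monic (n : ℕ) (α β : R) : (powSuccAddLinearPow n α β).Monic := by
  apply monic_X_pow_add
  calc ((C α * X + C β) ^ n).degree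
      ≤ n • (C α * X + C β).degree := degree_pow_le _ _
    _ ≤ n • (1 : WithBot ℕ) := nsmul_le_nsmul_right degree_linear_le n
    _ < ((n + 1 : ℕ) : WithBot ℕ) := by
        rw [nsmul_one]
        exact_mod_cast n.lt_succ_self

lemma eval_eq (n : ℕ) (α β x : R) :
    (powSuccAddLinearPow n α β).eval x = x ^ (n + 1) + (α * x + β) ^ n := by
  simp [powSuccAddLinearPow]

lemma derivative_eq (n : ℕ) (α β : R) :
    derivative (powSuccAddLinearPow n α β) =
      ((n : R[X]) + 1) * X ^ n + (n : R[X]) * (C α * X + C β) ^ (n - 1) * C α := by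
  simp [powSuccAddLinearPow, derivative_pow]

lemma two_le_rootMultiplicity_iff [Nontrivial R] :
    2 ≤ (powSuccAddLinearPow n α β).rootMultiplicity x ↔
      (powSuccAddLinearPow n α β).IsRoot x ∧
        (derivative (powSuccAddLinearPow n α β)).IsRoot x :=
  one_lt_rootMultiplicity_iff_isRoot (monic n α β).ne_zero

lemma succ_mul_sub_X_mul_derivative (hn : n ≠ 0) (α β : R) :
    ((n : R[X]) + 1) * powSuccAddLinearPow n α β - X * derivative (powSuccAddLinearPow n α β) =
      (C α * X + C β) ^ (n - 1) * (C α * X + ((n : R[X]) + 1) * C β) := by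
  rw [derivative_eq, powSuccAddLinearPow, ← pow_sub_one_mul hn (C α * X + C β)]
  ring

lemma succ_mul_eval_sub_mul_eval_derivative (hn : n ≠ 0) (α β x : R) :
    (n + 1) * (powSuccAddLinearPow n α β).eval x -
        x * (derivative (powSuccAddLinearPow n α β)).eval x =
      (α * x + β) ^ (n - 1) * (α * x + (n + 1) * β) := by
  simpa using congrArg (eval x) (succ_mul_sub_X_mul_derivative hn α β)

lemma pow_succ_mul_eval_of_mul_eq (hx : α * x = -((n + 1) * β)) :
    α ^ (n + 1) * (powSuccAddLinearPow n α β).eval x =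
      (-β) ^ n * (n ^ n * α ^ (n + 1) - (n + 1) ^ (n + 1) * β) := by
  have hlin : α * x + β = n * -β := by linear_combination hx
  calc α ^ (n + 1) * (powSuccAddLinearPow n α β).eval x
      = (α * x) ^ (n + 1) + α ^ (n + 1) * (α * x + β) ^ n := by
        rw [eval_eq, mul_add, ← mul_pow]
    _ = ((n + 1) * -β) ^ (n + 1) + α ^ (n + 1) * (n * -β) ^ n := by
        rw [hlin, hx, ← mul_neg]
    _ = (-β) ^ n * (n ^ n * α ^ (n + 1) - (n + 1) ^ (n + 1) * β) := by
        simp only [mul_pow, pow_succ (-β)]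
        ring

lemma eq_zero_or_eq_of_two_le_rootMultiplicity [IsDomain R] (hn : n ≠ 0)
    (h : 2 ≤ (powSuccAddLinearPow n α β).rootMultiplicity x) :
    β = 0 ∨ (n + 1) ^ (n + 1) * β = n ^ n * α ^ (n + 1) := by
  obtain ⟨hroot, hderiv⟩ := two_le_rootMultiplicity_iff.1 h
  have hprod : (α * x + β) ^ (n - 1) * (α * x + (n + 1) * β) = 0 := by
    rw [← succ_mul_eval_sub_mul_eval_derivative hn, hroot.eq_zero, hderiv.eq_zero, mul_zero,
      mul_zero, sub_zero]
  rcases mul_eq_zero.1 hprod with hpow | hlin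
  · have hlin : α * x + β = 0 := eq_zero_of_pow_eq_zero hpow
    have hx : x = 0 := by simpa [IsRoot.def, eval_eq, hlin, hn] using hroot
    exact .inl (by simpa [hx] using hlin)
  · have helim := pow_succ_mul_eval_of_mul_eq (eq_neg_of_add_eq_zero_left hlin)
    rw [hroot.eq_zero, mul_zero, zero_eq_mul] at helim
    exact helim.imp (fun h ↦ neg_eq_zero.1 (eq_zero_of_pow_eq_zero h))
      fun h ↦ (sub_eq_zero.1 h).symm

lemma two_le_rootMultiplicity_zero [Nontrivial R] (hn : 2 ≤ n) (α : R) :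
    2 ≤ (powSuccAddLinearPow n α 0).rootMultiplicity 0 := by
  have hn₀ : n ≠ 0 := by lia
  have hn₁ : n - 1 ≠ 0 := by lia
  simp [two_le_rootMultiplicity_iff, IsRoot.def, eval_eq, derivative_eq, hn₀, hn₁]

end CommRing

section Field

variable {K : Type*} [Field K] {n : ℕ} {α β : K}

lemma two_le_rootMultiplicity_neg_succ_mul_div (hn : n ≠ 0) (hα : α ≠ 0) (hβ : β ≠ 0)
    (hn' : (n + 1 : K) ≠ 0) (h : (n + 1) ^ (n + 1) * β = n ^ n * α ^ (n + 1)) :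
    2 ≤ (powSuccAddLinearPow n α β).rootMultiplicity (-((n + 1) * β) / α) := by
  set x := -((n + 1) * β) / α
  have hx : α * x = -((n + 1) * β) := mul_div_cancel₀ _ hα
  have hx₀ : x ≠ 0 := div_ne_zero (neg_ne_zero.2 (mul_ne_zero hn' hβ)) hα
  have hroot : (powSuccAddLinearPow n α β).eval x = 0 := by
    have helim := pow_succ_mul_eval_of_mul_eq hx
    rw [h, sub_self, mul_zero] at helim
    exact (mul_eq_zero.1 helim).resolve_left (pow_ne_zero _ hα)
  have hderiv : x * (derivative (powSuccAddLinearPow n α β)).eval x = 0 := by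
    simpa [hroot, hx] using succ_mul_eval_sub_mul_eval_derivative hn α β x
  exact two_le_rootMultiplicity_iff.2 ⟨hroot, (mul_eq_zero.1 hderiv).resolve_left hx₀⟩

lemma exists_two_le_rootMultiplicity_of_succ_pow_mul_eq (hn : n ≠ 0)
    (hK : (n + 1 : K) = 0 → ∀ a : K, ∃ x, x ^ (n + 1) = a) (hβ : β ≠ 0)
    (h : (n + 1) ^ (n + 1) * β = n ^ n * α ^ (n + 1)) :
    ∃ x, 2 ≤ (powSuccAddLinearPow n α β).rootMultiplicity x := by
  by_cases hα : α = 0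
  · have hn' : (n + 1 : K) = 0 := by simpa [hα, hβ] using h
    obtain ⟨x, hx⟩ := hK hn' (-β ^ n)
    have hroot : (powSuccAddLinearPow n α β).eval x = 0 := by simp [eval_eq, hα, hx]
    have hderiv : (derivative (powSuccAddLinearPow n α β)).eval x = 0 := by
      simp [derivative_eq, hα, hn']
    exact ⟨x, two_le_rootMultiplicity_iff.2 ⟨hroot, hderiv⟩⟩
  · have hn' : (n + 1 : K) ≠ 0 := by
      intro hn'
      have hn_neg : (n : K) = -1 := eq_neg_of_add_eq_zero_left hn'
      simp [hn_neg, hα] at h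
    exact ⟨_, two_le_rootMultiplicity_neg_succ_mul_div hn hα hβ hn' h⟩

end Field

end powSuccAddLinearPow

open powSuccAddLinearPow in
theorem stmt_19_general {K : Type*} [Field K] {n : ℕ} (hn : 2 ≤ n)
    (hK : (n + 1 : K) = 0 → ∀ a : K, ∃ x, x ^ (n + 1) = a) (α β : K) :
    (∃ x : K, 2 ≤ ((X : K[X]) ^ (n + 1) + (C α * X + C β) ^ n).rootMultiplicity x) ↔
      (β = 0 ∨ (n + 1) ^ (n + 1) * β = n ^ n * α ^ (n + 1)) := by
  have hn₀ : n ≠ 0 := by lia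
  refine ⟨fun ⟨_, hx⟩ ↦ eq_zero_or_eq_of_two_le_rootMultiplicity hn₀ hx, fun h ↦ ?_⟩
  rcases eq_or_ne β 0 with rfl | hβ
  · exact ⟨0, two_le_rootMultiplicity_zero hn α⟩
  · exact exists_two_le_rootMultiplicity_of_succ_pow_mul_eq hn₀ hK hβ (h.resolve_left hβ)

theorem stmt_19 {K : Type*} [Field K] [IsAlgClosed K]
    (hchar2 : ringChar K ≠ 2) (hchar3 : ringChar K ≠ 3)
    (α β : K) :
    (∃ x : K, 2 ≤ ((X : K[X]) ^ 4 + (C α * X + C β) ^ 3).rootMultiplicity x) ↔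
      (β = 0 ∨ 256 * β = 27 * α ^ 4) := by
  convert stmt_19_general (n := 3) (by norm_num)
    (fun _ a ↦ IsAlgClosed.exists_pow_nat_eq a (by norm_num)) α β using 3 <;> norm_num
end
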